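/- arXiv:1804.03647 — 2 statements merged into one kernel-verified Lean document; each statement's English description precedes it below -/
import Mathlib

section
/- There are infinitely many rank-2 positive non-saturated lattices L ⊆ ℤ^n (for various n) such that one of the lattice ideals I_L, I_{L^sat} is a complete intersection while the quotient of the polynomial ring by the other is not Cohen–Macaulay. In particular: (a) there are infinitely many such L with I_L a complete intersection and k[x]/I_{L^sat} not Cohen–Macaulay, and (b) there are infinitely many such L with k[x]/I_L not Cohen–Macaulay and I_{L^sat} a complete intersection. -/
/-!
Both families live in `ℤ⁴`; write `R = k[x₀, x₁, x₂, x₃]`.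

Failure of Cohen–Macaulayness is detected by `Tor₃(R/I, k)`, i.e. by the degree 1 cohomology of the
Koszul cochain complex of `R/I` on the variables: tuples `m` with `x_i m_j = x_j m_i` in `R/I`,
modulo the tuples `x_i h`. A free resolution of length 2 forces it to vanish
(`koszul_exact_of_resolution`), by a diagram chase using the acyclicity of the Koszul complex of
`R` in degrees 1, 2, 3. A tuple with `m_0 = x₁ᵉ` is nontrivial as soon as `x₁ᵉ` is not in
`(x₀) + I`, which is checked by setting `x₀ = x₂ = x₃ = 0` (`not_isCM_of_cocycle`).

* Part (a): all `L` have as saturation the lattice of the rational quartic curve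
  `k[s⁴, s³t, st³, t⁴]`, whose missing monomial `s²t²` gives the cocycle
  `(x₁², x₀x₂, x₁x₃, x₂²)`. The sublattices spanned by `M(3,-4,0,1)` and `(1,0,-4,3)` have ideal
  `(x₁^{4M} - (x₀³x₃)^M, x₂⁴ - x₀x₃³)`.
* Part (b): the saturation has ideal `(x₀ - x₁, x₂ - x₃)`, and the sublattices are
  `{(i,-i,j,-j) : i ≡ j mod r + 2}`, with cocycle
  `(x₁^{r+1}, x₀^{r+1}, x₀^r x₃, x₁^r x₂)`. For `r = 0` and `char k ≠ 2` the variety is a pair of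
  planes meeting in a point.
-/

open MvPolynomial

section LatticeDefs

variable {V κ : Type*}

/-- The exponent vector of the positive part `u₊` of an integer vector `u`. -/
noncomputable def posExp [Fintype V] (u : V → ℤ) : V →₀ ℕ :=
  Finsupp.equivFunOnFinite.symm fun i => (u i).toNat

/-- The exponent vector of the negative part `u₋` of an integer vector `u`. -/
noncomputable def negExp [Fintype V] (u : V → ℤ) : V →₀ ℕ :=
  Finsupp.equivFunOnFinite.symm fun i => (-u i).toNat

/-- The binomial `x^{u₊} - x^{u₋}` associated to an integer vector `u`. -/
noncomputable def latticeBinomial (k : Type*) [CommRing k] [Fintype V] (u : V → ℤ) :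
    MvPolynomial V k :=
  monomial (posExp u) (1 : k) - monomial (negExp u) (1 : k)

/-- The lattice ideal `I_L = ⟨x^{u₊} - x^{u₋} : u ∈ L⟩` of a lattice `L ⊆ ℤ^V`. -/
noncomputable def latticeIdeal (k : Type*) [CommRing k] [Fintype V]
    (L : Submodule ℤ (V → ℤ)) : Ideal (MvPolynomial V k) :=
  Ideal.span {p | ∃ u ∈ L, p = latticeBinomial k u}

/-- A lattice `L ⊆ ℤ^V` is positive if `L ∩ ℕ^V = {0}`. -/
def IsPositiveLattice (L : Submodule ℤ (V → ℤ)) : Prop :=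
  ∀ u ∈ L, (∀ i, 0 ≤ u i) → u = 0

/-- The rank of a lattice. -/
noncomputable def latticeRank (L : Submodule ℤ (V → ℤ)) : ℕ :=
  Module.finrank ℤ L

/-- The lattice `ℤB` spanned by the columns of an integer matrix `B`. -/
def colSpan [Fintype κ] (B : Matrix V κ ℤ) : Submodule ℤ (V → ℤ) :=
  LinearMap.range B.mulVecLin

/-- The ideal `I` can be generated by `m` elements (`I` is a complete intersection when
`m` is the codimension of `I`). -/
def IsCI {R : Type*} [CommRing R] (I : Ideal R) (m : ℕ) : Prop :=
  ∃ f : Fin m → R, Ideal.span (Set.range f) = I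

/-- A matrix is mixed if every column contains a strictly positive and a strictly
negative entry. -/
def Mixed (B : Matrix V κ ℤ) : Prop :=
  ∀ j, (∃ i, 0 < B i j) ∧ (∃ i, B i j < 0)

/-- A matrix is dominating if it contains no square mixed submatrices. -/
def Dominating {a b : ℕ} (B : Matrix (Fin a) (Fin b) ℤ) : Prop :=
  ∀ s : ℕ, s ≠ 0 → ∀ (r : Fin s → Fin a) (c : Fin s → Fin b),
    Function.Injective r → Function.Injective c → ¬ Mixed (B.submatrix r c)

/-- The columns of `B` form a `ℤ`-basis of the lattice `L` (so that the rows of `B`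
are a Gale diagram of `L`). -/
def IsLatticeBasis {n m : ℕ} (L : Submodule ℤ (Fin n → ℤ)) (B : Matrix (Fin n) (Fin m) ℤ) :
    Prop :=
  LinearIndependent ℤ (fun j : Fin m => fun i => B i j) ∧ colSpan B = L

/-- The Gale diagram given by the rows of `B` is imbalanced: each row has `b_{i1} = 0`
or `b_{i2} ≥ 0`. -/
def Imbalanced {n : ℕ} (B : Matrix (Fin n) (Fin 2) ℤ) : Prop :=
  ∀ i, B i 0 = 0 ∨ 0 ≤ B i 1

/-- The rows of `B` meet all four open quadrants of `ℝ²`. -/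
def MeetsFourQuadrants {n : ℕ} (B : Matrix (Fin n) (Fin 2) ℤ) : Prop :=
  (∃ i, 0 < B i 0 ∧ 0 < B i 1) ∧ (∃ i, 0 < B i 0 ∧ B i 1 < 0) ∧
    (∃ i, B i 0 < 0 ∧ 0 < B i 1) ∧ (∃ i, B i 0 < 0 ∧ B i 1 < 0)

/-- The saturation `L^sat = {u : m • u ∈ L for some positive integer m}` of a lattice. -/
noncomputable def saturation (L : Submodule ℤ (V → ℤ)) : Submodule ℤ (V → ℤ) where
  carrier := {u | ∃ m : ℕ, 0 < m ∧ (m : ℤ) • u ∈ L}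
  zero_mem' := ⟨1, one_pos, by simp⟩
  add_mem' := by
    rintro a b ⟨p, hp, hpa⟩ ⟨q, hq, hqb⟩
    refine ⟨p * q, Nat.mul_pos hp hq, ?_⟩
    have ha : ((p * q : ℕ) : ℤ) • a ∈ L := by
      have h : ((p * q : ℕ) : ℤ) • a = (q : ℤ) • ((p : ℤ) • a) := by
        rw [smul_smul]; push_cast; rw [mul_comm]
      rw [h]; exact L.smul_mem _ hpa
    have hb : ((p * q : ℕ) : ℤ) • b ∈ L := by
      have h : ((p * q : ℕ) : ℤ) • b = (p : ℤ) • ((q : ℤ) • b) := by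
        rw [smul_smul]; push_cast; ring_nf
      rw [h]; exact L.smul_mem _ hqb
    rw [smul_add]
    exact L.add_mem ha hb
  smul_mem' := by
    rintro c a ⟨p, hp, hpa⟩
    exact ⟨p, hp, by rw [smul_comm]; exact L.smul_mem _ hpa⟩

/-- The data `(σ, A, p)` of a finite free resolution of `k[x]/I`:
`⋯ → k[x]^{σ(j+1)} --A j--> k[x]^{σ j} → ⋯ → k[x]^{σ 0} --v ↦ Σ v g * p g--> k[x]/I → 0`
is exact. -/
def IsFreeResolution (k : Type*) [Field k] [Fintype V]
    (I : Ideal (MvPolynomial V k)) (σ : ℕ → Type) [∀ j, Fintype (σ j)]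
    (A : ∀ j, Matrix (σ j) (σ (j + 1)) (MvPolynomial V k))
    (p : σ 0 → MvPolynomial V k) : Prop :=
  Ideal.span (Set.range p) ⊔ I = ⊤ ∧
    (∀ v : σ 0 → MvPolynomial V k,
      (∑ g, v g * p g) ∈ I ↔ v ∈ LinearMap.range (A 0).mulVecLin) ∧
    ∀ j, LinearMap.ker (A j).mulVecLin = LinearMap.range (A (j + 1)).mulVecLin

/-- `k[x]/I` admits a free resolution of length at most `m`. -/
def HasFreeResolutionOfLength (k : Type*) [Field k] [Fintype V]
    (I : Ideal (MvPolynomial V k)) (m : ℕ) : Prop :=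
  ∃ (σ : ℕ → Type) (hfin : ∀ j, Fintype (σ j))
    (A : ∀ j, Matrix (σ j) (σ (j + 1)) (MvPolynomial V k))
    (p : σ 0 → MvPolynomial V k),
    (∀ j, m < j → IsEmpty (σ j)) ∧ @IsFreeResolution V k _ _ I σ hfin A p

/-- Cohen–Macaulayness of `k[x]/I_L` for a positive lattice `L`, via the
Auslander–Buchsbaum characterization: the quotient is Cohen–Macaulay if and only if its
projective dimension over `k[x]` equals the codimension `rank L` of `I_L`, i.e. iff it
admits a free resolution of length `rank L`. -/
def IsCMLatticeQuotient (k : Type*) [Field k] [Fintype V]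
    (L : Submodule ℤ (V → ℤ)) : Prop :=
  HasFreeResolutionOfLength k (latticeIdeal k L) (latticeRank L)

/-- The degree in `Γ = ℤ^V/L` of the monomial with exponent vector `u`. -/
noncomputable def degQ [Fintype V] (L : Submodule ℤ (V → ℤ)) (u : V →₀ ℕ) :
    (V → ℤ) ⧸ L :=
  Submodule.Quotient.mk fun i => (u i : ℤ)

/-- The data `(σ, deg, A, p)` is a minimal free resolution of `k[x]/I_L`, graded by
`Γ = ℤ^V/L`: a free resolution in which all differentials (and the augmentation) are
homogeneous for the degrees `deg` of the generators and have entries with zero constant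
term.  The `Γ`-graded Betti number `β_{j,C}` of `k[x]/I_L` is then the number of
generators `g : σ j` with `deg j g = C`. -/
def IsMinimalGradedFreeResolution (k : Type*) [Field k] [Fintype V]
    (L : Submodule ℤ (V → ℤ)) (σ : ℕ → Type) [∀ j, Fintype (σ j)]
    (deg : ∀ j, σ j → ((V → ℤ) ⧸ L))
    (A : ∀ j, Matrix (σ j) (σ (j + 1)) (MvPolynomial V k))
    (p : σ 0 → MvPolynomial V k) : Prop :=
  IsFreeResolution k (latticeIdeal k L) σ A p ∧
    (∀ g, ∀ u ∈ (p g).support, degQ L u = deg 0 g) ∧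
    (∀ j g f, ∀ u ∈ (A j g f).support, degQ L u + deg j g = deg (j + 1) f) ∧
    ∀ j g f, MvPolynomial.coeff 0 (A j g f) = 0

/-- `F` is a face of the simplicial complex `Δ_C` attached to the fiber `C = c + L`:
the fiber contains a coordinatewise nonnegative vector whose support contains `F`. -/
def FaceOf (L : Submodule ℤ (V → ℤ)) (c : V → ℤ) (F : Finset V) : Prop :=
  ∃ a : V → ℤ, (∀ i, 0 ≤ a i) ∧ a - c ∈ L ∧ ∀ i ∈ F, a i ≠ 0

/-- The simplicial boundary matrix of the complex whose faces are given by `P`, from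
chains on `(d+1)`-element faces to chains on `d`-element faces. -/
noncomputable def boundaryMatrix (k : Type*) [Field k] [LinearOrder V]
    (P : Finset V → Prop) (d : ℕ) :
    Matrix {F : Finset V // P F ∧ F.card = d} {F : Finset V // P F ∧ F.card = d + 1} k :=
  fun G F =>
    if G.1 ⊆ F.1 then
      ∑ i ∈ F.1 \ G.1, (-1 : k) ^ (F.1.filter fun x => x < i).card
    else 0

/-- The rank of the `j`-th reduced simplicial homology, with coefficients in `k`, of the
simplicial complex whose faces are given by `P`:
`dim ker ∂_j - dim im ∂_{j+1}` where chains in homological degree `j` live on faces with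
`j+1` elements. -/
noncomputable def reducedHomologyRank (k : Type*) [Field k] [Fintype V] [LinearOrder V]
    (P : Finset V → Prop) (j : ℕ) : ℕ :=
  letI : Fintype {F : Finset V // P F ∧ F.card = j + 1} := Fintype.ofFinite _
  letI : Fintype {F : Finset V // P F ∧ F.card = j + 1 + 1} := Fintype.ofFinite _
  Fintype.card {F : Finset V // P F ∧ F.card = j + 1} -
    (boundaryMatrix k P j).rank - (boundaryMatrix k P (j + 1)).rank

end LatticeDefs

/-! ### Koszul acyclicity and short resolutions -/

section Koszul

variable {R : Type*} [CommRing R]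

/-- `x 0, x 1, x 2, x 3` is a regular sequence on `R`, spelled out elementwise (properness of the
ideal it generates is not required). -/
structure RegSeq (x : Fin 4 → R) : Prop where
  r1 : ∀ u, x 0 * u = 0 → u = 0
  r2 : ∀ u α, x 1 * u = x 0 * α → ∃ a, u = x 0 * a
  r3 : ∀ u α β, x 2 * u = x 0 * α + x 1 * β → ∃ a b, u = x 0 * a + x 1 * b
  r4 : ∀ u α β γ, x 3 * u = x 0 * α + x 1 * β + x 2 * γ →
    ∃ a b c, u = x 0 * a + x 1 * b + x 2 * c

/-- Koszul cohomology of a regular sequence of length 4 vanishes in degree 1. -/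
lemma RegSeq.h1 {x : Fin 4 → R} (hx : RegSeq x) (v : Fin 4 → R)
    (hv : ∀ i j, x i * v j = x j * v i) : ∃ h, ∀ i, v i = x i * h := by
  obtain ⟨h, hh⟩ := hx.r2 (v 0) (v 1) (hv 1 0)
  refine ⟨h, fun i => ?_⟩
  have h0 : x 0 * (v i - x i * h) = 0 := by
    linear_combination hv 0 i + x i * hh
  linear_combination hx.r1 _ h0

/-- Syzygies of three terms of the sequence are generated by the Koszul ones. -/
lemma RegSeq.syz3 {x : Fin 4 → R} (hx : RegSeq x) (a b c : R)
    (h : x 0 * a + x 1 * b + x 2 * c = 0) :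
    ∃ p q r, a = x 1 * p + x 2 * q ∧ b = - x 0 * p + x 2 * r ∧ c = - x 0 * q - x 1 * r := by
  obtain ⟨α, β, hc⟩ := hx.r3 c (-a) (-b) (by linear_combination h)
  obtain ⟨γ, hb⟩ := hx.r2 (b + x 2 * β) (-(a + x 2 * α))
    (by linear_combination h - x 2 * hc)
  have ha := hx.r1 (a + x 2 * α + x 1 * γ) (by linear_combination h - x 2 * hc - x 1 * hb)
  exact ⟨-γ, -α, -β, by linear_combination ha, by linear_combination hb,
    by linear_combination hc⟩

/-- Vanishing of Koszul cohomology in degree 3. The six unknowns are the coordinates of an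
element of `Λ²R⁴`, the four given ones those of an element of `Λ³R⁴`. -/
lemma RegSeq.h3 {x : Fin 4 → R} (hx : RegSeq x) (t012 t013 t023 t123 : R)
    (h : x 0 * t123 - x 1 * t023 + x 2 * t013 - x 3 * t012 = 0) :
    ∃ s01 s02 s03 s12 s13 s23,
      t012 = x 0 * s12 - x 1 * s02 + x 2 * s01 ∧
      t013 = x 0 * s13 - x 1 * s03 + x 3 * s01 ∧
      t023 = x 0 * s23 - x 2 * s03 + x 3 * s02 ∧
      t123 = x 1 * s23 - x 2 * s13 + x 3 * s12 := by
  obtain ⟨α, β, γ, h4⟩ := hx.r4 t012 t123 (-t023) t013 (by linear_combination -h)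
  obtain ⟨p, q, r, h1, h2, h3⟩ := hx.syz3 (t123 - x 3 * α) (-t023 - x 3 * β) (t013 - x 3 * γ)
    (by linear_combination h + x 3 * h4)
  exact ⟨γ, -β, r, α, -q, p, by linear_combination h4, by linear_combination h3,
    by linear_combination -h2, by linear_combination h1⟩

/-- Vanishing of Koszul cohomology in degree 2. -/
lemma RegSeq.h2 {x : Fin 4 → R} (hx : RegSeq x) (w01 w02 w03 w12 w13 w23 : R)
    (h012 : x 0 * w12 - x 1 * w02 + x 2 * w01 = 0)
    (h013 : x 0 * w13 - x 1 * w03 + x 3 * w01 = 0)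
    (h023 : x 0 * w23 - x 2 * w03 + x 3 * w02 = 0) :
    ∃ r : Fin 4 → R,
      w01 = x 0 * r 1 - x 1 * r 0 ∧ w02 = x 0 * r 2 - x 2 * r 0 ∧
      w03 = x 0 * r 3 - x 3 * r 0 ∧ w12 = x 1 * r 2 - x 2 * r 1 ∧
      w13 = x 1 * r 3 - x 3 * r 1 ∧ w23 = x 2 * r 3 - x 3 * r 2 := by
  obtain ⟨p, q, r, h1, h2, h3⟩ := hx.syz3 w12 (-w02) w01 (by linear_combination h012)
  obtain ⟨γ, hγ⟩ := hx.r2 (w03 + x 3 * r) (w13 - x 3 * q)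
    (by linear_combination -h013 + x 3 * h3)
  have e1 := hx.r1 (w13 - x 3 * q - x 1 * γ)
    (by linear_combination h013 - x 3 * h3 + x 1 * hγ)
  have e2 := hx.r1 (w23 + x 3 * p - x 2 * γ)
    (by linear_combination h023 + x 3 * h2 + x 2 * hγ)
  refine ⟨![r, -q, p, γ], ?_, ?_, ?_, ?_, ?_, ?_⟩ <;>
    simp only [Matrix.cons_val]
  · linear_combination h3
  · linear_combination -h2
  · linear_combination hγ
  · linear_combination h1
  · linear_combination e1
  · linear_combination e2

/-- Let `R/I` have a free resolution `0 → R^σ₂ → R^σ₁ → R^σ₀ → R/I → 0`. Then its Koszul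
cohomology with respect to a regular sequence of length 4 vanishes in degree 1. A cocycle is
lifted step by step along the resolution and corrected back down using the acyclicity of the
Koszul complex of `R` in degrees 3, 2 and 1. -/
lemma RegSeq.koszul_exact {x : Fin 4 → R} (hx : RegSeq x) {I : Ideal R}
    {σ₀ σ₁ σ₂ : Type*} [Fintype σ₀] [Fintype σ₁] [Fintype σ₂] {p : σ₀ → R}
    (htop : Ideal.span (Set.range p) ⊔ I = ⊤)
    (A₀ : Matrix σ₀ σ₁ R) (A₁ : Matrix σ₁ σ₂ R)
    (hp : ∀ v : σ₀ → R, (∑ g, v g * p g) ∈ I ↔ v ∈ LinearMap.range A₀.mulVecLin)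
    (hA : LinearMap.ker A₀.mulVecLin = LinearMap.range A₁.mulVecLin)
    (hinj : ∀ z, A₁.mulVec z = 0 → z = 0)
    (m : Fin 4 → R) (hm : ∀ i j, x i * m j - x j * m i ∈ I) :
    ∃ h, ∀ i, m i - x i * h ∈ I := by
  have hlift : ∀ f : R, ∃ v : σ₀ → R,
      f - ∑ g, v g * p g ∈ I := by
    intro f
    have : f ∈ Ideal.span (Set.range p) ⊔ I := by rw [htop]; trivial
    obtain ⟨y, hy, z, hz, rfl⟩ := Submodule.mem_sup.1 this
    obtain ⟨v, rfl⟩ := Ideal.mem_span_range_iff_exists_fun.1 hy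
    exact ⟨v, by simpa using hz⟩
  choose v hv using fun i => hlift (m i)
  have hw : ∀ i j, ∃ w, A₀.mulVec w = x i • v j - x j • v i := by
    intro i j
    have h1 : x i • v j - x j • v i ∈ LinearMap.range A₀.mulVecLin := by
      rw [← hp]
      have : ∑ g, (x i • v j - x j • v i) g * p g
          = x i * ∑ g, v j g * p g - x j * ∑ g, v i g * p g := by
        rw [Finset.mul_sum, Finset.mul_sum, ← Finset.sum_sub_distrib]
        refine Finset.sum_congr rfl fun g _ => ?_
        simp only [Pi.sub_apply, Pi.smul_apply, smul_eq_mul]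
        ring
      rw [this]
      have h2 := I.sub_mem (hm i j)
        (I.sub_mem (I.mul_mem_left (x i) (hv j)) (I.mul_mem_left (x j) (hv i)))
      convert h2 using 1
      ring
    obtain ⟨w, hw⟩ := h1
    exact ⟨w, by simpa using hw⟩
  choose w hw using hw
  have ht : ∀ i j l, ∃ t, A₁.mulVec t
      = x i • w j l - x j • w i l + x l • w i j := by
    intro i j l
    have h1 : x i • w j l - x j • w i l + x l • w i j
        ∈ LinearMap.ker A₀.mulVecLin := by
      rw [LinearMap.mem_ker, Matrix.mulVecLin_apply, Matrix.mulVec_add, Matrix.mulVec_sub,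
        Matrix.mulVec_smul, Matrix.mulVec_smul, Matrix.mulVec_smul, hw, hw, hw]
      module
    rw [hA] at h1
    obtain ⟨t, ht⟩ := h1
    exact ⟨t, by simpa using ht⟩
  choose t ht using ht
  have hcyc := hinj (x 0 • t 1 2 3 - x 1 • t 0 2 3
      + x 2 • t 0 1 3 - x 3 • t 0 1 2) (by
    simp only [Matrix.mulVec_add, Matrix.mulVec_sub, Matrix.mulVec_smul, ht]
    module)
  choose s01 s02 s03 s12 s13 s23 hs012 hs013 hs023 hs123 using fun g =>
    hx.h3 (t 0 1 2 g) (t 0 1 3 g) (t 0 2 3 g) (t 1 2 3 g) (by simpa using congrFun hcyc g)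
  have e012 := ht 0 1 2
  have e013 := ht 0 1 3
  have e023 := ht 0 2 3
  rw [show t 0 1 2 = x 0 • s12 - x 1 • s02 + x 2 • s01 from
    funext hs012] at e012
  rw [show t 0 1 3 = x 0 • s13 - x 1 • s03 + x 3 • s01 from
    funext hs013] at e013
  rw [show t 0 2 3 = x 0 • s23 - x 2 • s03 + x 3 • s02 from
    funext hs023] at e023
  simp only [Matrix.mulVec_add, Matrix.mulVec_sub, Matrix.mulVec_smul] at e012 e013 e023
  choose r hr01 hr02 hr03 hr12 hr13 hr23 using fun g =>
    hx.h2 (w 0 1 g - A₁.mulVec s01 g) (w 0 2 g - A₁.mulVec s02 g)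
      (w 0 3 g - A₁.mulVec s03 g) (w 1 2 g - A₁.mulVec s12 g)
      (w 1 3 g - A₁.mulVec s13 g) (w 2 3 g - A₁.mulVec s23 g)
      (by have := congrFun e012 g
          simp only [Pi.add_apply, Pi.sub_apply, Pi.smul_apply, smul_eq_mul] at this
          linear_combination -this)
      (by have := congrFun e013 g
          simp only [Pi.add_apply, Pi.sub_apply, Pi.smul_apply, smul_eq_mul] at this
          linear_combination -this)
      (by have := congrFun e023 g
          simp only [Pi.add_apply, Pi.sub_apply, Pi.smul_apply, smul_eq_mul] at this
          linear_combination -this)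
  have hcomp : ∀ z, A₀.mulVec (A₁.mulVec z) = 0 := by
    intro z
    have h1 : A₁.mulVec z ∈ LinearMap.ker A₀.mulVecLin := by
      rw [hA]; exact ⟨z, by simp⟩
    simpa using h1
  have key : ∀ (i j : Fin 4) (s : σ₂ → R),
      (∀ g, w i j g - A₁.mulVec s g = x i * r g j - x j * r g i) →
      x i • (v j - A₀.mulVec fun g => r g j)
        = x j • (v i - A₀.mulVec fun g => r g i) := by
    intro i j s h
    have h1 : w i j = A₁.mulVec s + (x i • (fun g => r g j)
        - x j • (fun g => r g i)) := by
      funext g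
      simp only [Pi.add_apply, Pi.sub_apply, Pi.smul_apply, smul_eq_mul]
      linear_combination h g
    have h2 := hw i j
    rw [h1, Matrix.mulVec_add, hcomp, Matrix.mulVec_sub, Matrix.mulVec_smul,
      Matrix.mulVec_smul, zero_add] at h2
    rw [smul_sub, smul_sub, sub_eq_sub_iff_sub_eq_sub, ← h2]
  have hall : ∀ i j, x i • (v j - A₀.mulVec fun g => r g j)
        = x j • (v i - A₀.mulVec fun g => r g i) := by
    have k01 := key 0 1 _ hr01
    have k02 := key 0 2 _ hr02
    have k03 := key 0 3 _ hr03
    have k12 := key 1 2 _ hr12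
    have k13 := key 1 3 _ hr13
    have k23 := key 2 3 _ hr23
    intro i j
    fin_cases i <;> fin_cases j <;>
      first | rfl | assumption | (symm; assumption)
  choose h hh using fun g => hx.h1 (fun i => v i g - A₀.mulVec (fun g => r g i) g)
    (fun i j => by simpa using congrFun (hall i j) g)
  refine ⟨∑ g, h g * p g, fun i => ?_⟩
  have hmem : ∑ g, (A₀.mulVec (fun g => r g i)) g * p g ∈ I := by
    rw [hp]; exact ⟨fun g => r g i, by simp⟩
  have hsum : ∑ g, v i g * p g
      = x i * ∑ g, h g * p g + ∑ g, (A₀.mulVec (fun g => r g i)) g * p g := by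
    rw [Finset.mul_sum, ← Finset.sum_add_distrib]
    refine Finset.sum_congr rfl fun g _ => ?_
    linear_combination p g * hh g i
  have h2 := I.add_mem (hv i) hmem
  convert h2 using 1
  rw [hsum]; ring

end Koszul

/-! ### The variables of the polynomial ring -/

section Variables

variable {k : Type*} [Field k]

/-- A product `X j * u` lies in a monomial prime `(X i : i ∈ s)` not containing `X j` only if
`u` does. -/
lemma mem_span_of_X_mul_mem {s : Set (Fin 4)} {j : Fin 4} (hj : j ∉ s)
    {u : MvPolynomial (Fin 4) k}
    (h : X j * u ∈ Ideal.span ((X : Fin 4 → MvPolynomial (Fin 4) k) '' s)) :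
    u ∈ Ideal.span ((X : Fin 4 → MvPolynomial (Fin 4) k) '' s) := by
  rw [mem_ideal_span_X_image] at h ⊢
  intro m hm
  obtain ⟨i, hi, hne⟩ := h (Finsupp.single j 1 + m) (by
    rw [mem_support_iff, coeff_X_mul]; exact mem_support_iff.1 hm)
  refine ⟨i, hi, ?_⟩
  have : j ≠ i := fun e => hj (e ▸ hi)
  simpa [Finsupp.single_apply, this] using hne

lemma regSeq_X : RegSeq (X : Fin 4 → MvPolynomial (Fin 4) k) where
  r1 u h := by simpa [X_ne_zero] using h
  r2 u α h := by
    have := mem_span_of_X_mul_mem (k := k) (s := {0}) (j := 1) (by simp) (u := u) (by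
      rw [h, Set.image_singleton]
      exact Ideal.mul_mem_right _ _ (Ideal.subset_span rfl))
    rw [Set.image_singleton, Ideal.mem_span_singleton] at this
    exact this
  r3 u α β h := by
    have := mem_span_of_X_mul_mem (k := k) (s := {0, 1}) (j := 2) (by simp) (u := u) (by
      rw [h, Set.image_pair, Ideal.mem_span_pair]
      exact ⟨α, β, by ring⟩)
    rw [Set.image_pair, Ideal.mem_span_pair] at this
    obtain ⟨a, b, h⟩ := this
    exact ⟨a, b, by rw [← h]; ring⟩
  r4 u α β γ h := by
    have := mem_span_of_X_mul_mem (k := k) (s := {0, 1, 2}) (j := 3) (by simp) (u := u) (by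
      rw [h, Set.image_insert_eq, Set.image_pair, Ideal.mem_span_insert]
      exact ⟨α, _, Ideal.mem_span_pair.2 ⟨β, γ, rfl⟩, by ring⟩)
    rw [Set.image_insert_eq, Set.image_pair, Ideal.mem_span_insert] at this
    obtain ⟨a, z, hz, rfl⟩ := this
    obtain ⟨b, c, rfl⟩ := Ideal.mem_span_pair.1 hz
    exact ⟨a, b, c, by ring⟩

/-- If `k[x₀,…,x₃]/I` has a free resolution of length at most 2, its Koszul cohomology with
respect to the variables vanishes in degree 1 (that is, `Tor₃(k[x]/I, k) = 0`). -/
lemma koszul_exact_of_resolution {I : Ideal (MvPolynomial (Fin 4) k)}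
    (hI : HasFreeResolutionOfLength k I 2) (m : Fin 4 → MvPolynomial (Fin 4) k)
    (hm : ∀ i j, X i * m j - X j * m i ∈ I) :
    ∃ h, ∀ i, m i - X i * h ∈ I := by
  obtain ⟨σ, hfin, A, p, hempty, htop, hp, hA⟩ := hI
  refine regSeq_X.koszul_exact htop (A 0) (A 1) hp (hA 0) ?_ m hm
  -- `A 1` is injective because the next free module in the resolution is zero.
  intro z hz
  have h1 : z ∈ LinearMap.ker (A 1).mulVecLin := by simpa using hz
  rw [hA 1] at h1
  obtain ⟨y, rfl⟩ := h1
  have : IsEmpty (σ (1 + 1 + 1)) := hempty _ (by norm_num)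
  have : y = 0 := Subsingleton.elim _ _
  rw [this, map_zero]

end Variables

/-! ### A criterion for failure of Cohen–Macaulayness -/

section Lattices

lemma latticeBinomial_eq (k : Type*) [Field k] (u : Fin 4 → ℤ) :
    latticeBinomial k u =
      X 0 ^ (u 0).toNat * X 1 ^ (u 1).toNat * X 2 ^ (u 2).toNat * X 3 ^ (u 3).toNat
      - X 0 ^ (-u 0).toNat * X 1 ^ (-u 1).toNat * X 2 ^ (-u 2).toNat * X 3 ^ (-u 3).toNat := by
  simp [latticeBinomial, posExp, negExp, monomial_eq, Finsupp.prod_fintype, Fin.prod_univ_four]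

lemma latticeBinomial_mem (k : Type*) [Field k] {L : Submodule ℤ (Fin 4 → ℤ)} {u : Fin 4 → ℤ}
    (hu : u ∈ L) : latticeBinomial k u ∈ latticeIdeal k L :=
  Ideal.subset_span ⟨u, hu, rfl⟩

/-- Criterion for failure of Cohen–Macaulayness: a degree 1 Koszul cocycle `m` modulo `I_L`
whose component `m 0 = x₁ᵉ` is not in `(x₀) + I_L`. For positive `L` the latter follows if
no vector of `L` has `x₁`-coordinate in `[-e, -1]` and all other coordinates nonnegative. -/
lemma not_isCM_of_cocycle (k : Type*) [Field k] {L : Submodule ℤ (Fin 4 → ℤ)}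
    (hL : latticeRank L = 2) (hpos : IsPositiveLattice L) (m : Fin 4 → MvPolynomial (Fin 4) k) (e : ℕ)
    (hm : ∀ i j, i < j → X i * m j - X j * m i ∈ latticeIdeal k L)
    (hm0 : m 0 = X 1 ^ e)
    (hpure : ∀ u ∈ L, 0 ≤ u 0 → 0 ≤ u 2 → 0 ≤ u 3 → u 1 < 0 → (e : ℤ) < - u 1) :
    ¬ IsCMLatticeQuotient k L := by
  intro hCM
  rw [IsCMLatticeQuotient, hL] at hCM
  obtain ⟨h, hh⟩ := koszul_exact_of_resolution hCM m (by
    intro i j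
    rcases lt_trichotomy i j with hij | rfl | hij
    · exact hm i j hij
    · simp
    · rw [← neg_sub]; exact neg_mem (hm j i hij))
  -- Set all variables but `x₁` to zero.
  let φ : MvPolynomial (Fin 4) k →ₐ[k] Polynomial k :=
    aeval ![0, Polynomial.X, 0, 0]
  have hφ : latticeIdeal k L ≤ (Ideal.span {(Polynomial.X : Polynomial k) ^ (e + 1)}).comap φ := by
    rw [latticeIdeal, Ideal.span_le]
    rintro _ ⟨u, hu, rfl⟩
    rcases eq_or_ne u 0 with rfl | hu0
    · simp [latticeBinomial, posExp, negExp]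
    -- Every monomial `x^{w₊}` with `0 ≠ w ∈ L` maps into `(x^{e+1})`.
    have key : ∀ w ∈ L, w ≠ 0 →
        φ (X 0 ^ (w 0).toNat * X 1 ^ (w 1).toNat * X 2 ^ (w 2).toNat * X 3 ^ (w 3).toNat)
          ∈ Ideal.span {(Polynomial.X : Polynomial k) ^ (e + 1)} := by
      intro w hw hw0
      simp only [φ, map_pow, map_mul, aeval_X, Matrix.cons_val]
      by_cases h0 : (w 0).toNat = 0
      swap
      · simp [h0]
      by_cases h2 : (w 2).toNat = 0
      swap
      · simp [h2]
      by_cases h3 : (w 3).toNat = 0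
      swap
      · simp [h3]
      have hlt := hpure (-w) (neg_mem hw)
      simp only [Pi.neg_apply] at hlt
      have h1 : 0 < w 1 := by
        by_contra hcon
        apply hw0
        rw [← neg_eq_zero]
        refine hpos (-w) (neg_mem hw) fun i => ?_
        fin_cases i <;> simp <;> omega
      have := hlt (by omega) (by omega) (by omega) (by omega)
      simp only [h0, h2, h3, pow_zero, one_mul, mul_one, Ideal.mem_span_singleton]
      exact pow_dvd_pow _ (by omega)
    rw [latticeBinomial_eq]
    simp only [SetLike.mem_coe, Ideal.mem_comap]
    rw [map_sub]
    exact sub_mem (key u hu hu0) (key (-u) (neg_mem hu) (by simpa using hu0))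
  have h0 := hφ (hh 0)
  rw [Ideal.mem_comap, Ideal.mem_span_singleton, hm0] at h0
  simp only [φ, map_sub, map_pow, map_mul, aeval_X, Matrix.cons_val, zero_mul, sub_zero] at h0
  rw [pow_dvd_pow_iff Polynomial.X_ne_zero Polynomial.not_isUnit_X] at h0
  omega

lemma latticeRank_span_pair (u v : Fin 4 → ℤ)
    (h : ∀ s t : ℤ, s • u + t • v = 0 → s = 0 ∧ t = 0) :
    latticeRank (Submodule.span ℤ {u, v}) = 2 := by
  have hli : LinearIndependent ℤ ![u, v] := LinearIndependent.pair_iff.2 h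
  have := finrank_span_eq_card hli
  rw [Matrix.range_cons, Matrix.range_cons, Matrix.range_empty, Set.union_empty] at this
  exact this

end Lattices

/-! ### Complete intersections inside the quartic lattice -/

section FamilyA

/-- The saturated lattice of the rational quartic curve, i.e. the kernel of
`(4 3 1 0 ; 0 1 3 4)`. -/
def quarticLattice : Submodule ℤ (Fin 4 → ℤ) :=
  Submodule.span ℤ {![1, -1, -1, 1], ![-2, 3, -1, 0]}

lemma mem_quarticLattice {u : Fin 4 → ℤ} :
    u ∈ quarticLattice ↔ 4 * u 0 + 3 * u 1 + u 2 = 0 ∧ u 1 + 3 * u 2 + 4 * u 3 = 0 := by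
  rw [quarticLattice, Submodule.mem_span_pair]
  constructor
  · rintro ⟨a, b, rfl⟩
    simp
    constructor <;> ring
  · rintro ⟨h1, h2⟩
    refine ⟨u 3, - u 2 - u 3, ?_⟩
    ext i
    fin_cases i <;> simp <;> linarith

/-- The sublattice of the quartic lattice with ideal
`(x₁^{4M} - (x₀³x₃)^M, x₂⁴ - x₀x₃³)`, where `M = m + 1`. -/
def latA (m : ℕ) : Submodule ℤ (Fin 4 → ℤ) :=
  Submodule.span ℤ {![3 * ((m : ℤ) + 1), -4 * (m + 1), 0, m + 1], ![1, 0, -4, 3]}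

lemma mem_latA {m : ℕ} {u : Fin 4 → ℤ} :
    u ∈ latA m ↔ ∃ s t : ℤ, u 0 = 3 * ((m + 1) * s) + t ∧ u 1 = -(4 * ((m + 1) * s)) ∧
      u 2 = -(4 * t) ∧ u 3 = (m + 1) * s + 3 * t := by
  rw [latA, Submodule.mem_span_pair]
  constructor
  · rintro ⟨s, t, rfl⟩
    exact ⟨s, t, by simp; ring, by simp; ring, by simp; ring, by simp; ring⟩
  · rintro ⟨s, t, h0, h1, h2, h3⟩
    refine ⟨s, t, ?_⟩
    ext i
    fin_cases i <;> simp [h0, h1, h2, h3] <;> ring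

lemma latA_le (m : ℕ) : latA m ≤ quarticLattice := by
  intro u hu
  obtain ⟨s, t, h0, h1, h2, h3⟩ := mem_latA.1 hu
  rw [mem_quarticLattice, h0, h1, h2, h3]
  constructor <;> ring

lemma quarticLattice_pos : IsPositiveLattice quarticLattice := by
  intro u hu h
  rw [mem_quarticLattice] at hu
  have h0 := h 0
  have h1 := h 1
  have h2 := h 2
  have h3 := h 3
  ext i
  fin_cases i <;> simp <;> omega

lemma saturation_latA (m : ℕ) : saturation (latA m) = quarticLattice := by
  ext u
  constructor
  · rintro ⟨N, hN, hu⟩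
    have h := mem_quarticLattice.1 (latA_le m hu)
    simp only [Pi.smul_apply, smul_eq_mul] at h
    have hN' : (N : ℤ) ≠ 0 := by exact_mod_cast hN.ne'
    rw [mem_quarticLattice]
    exact ⟨mul_left_cancel₀ hN' (by linarith [h.1]), mul_left_cancel₀ hN' (by linarith [h.2])⟩
  · intro hu
    rw [mem_quarticLattice] at hu
    have e0 : u 0 = 2 * u 2 + 3 * u 3 := by omega
    have e1 : u 1 = -3 * u 2 - 4 * u 3 := by omega
    refine ⟨4 * (m + 1), by omega, mem_latA.2 ⟨4 * u 3 + 3 * u 2, - u 2 * (m + 1), ?_⟩⟩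
    simp only [Pi.smul_apply, smul_eq_mul, e0, e1]
    push_cast
    refine ⟨?_, ?_, ?_, ?_⟩ <;> ring

lemma latA_injective : Function.Injective latA := by
  have key : ∀ m n, latA m = latA n → n + 1 ∣ m + 1 := by
    intro m n h
    have : ![3 * ((m : ℤ) + 1), -4 * (m + 1), 0, m + 1] ∈ latA n :=
      h ▸ Submodule.subset_span (by simp)
    obtain ⟨s, t, h0, h1, h2, h3⟩ := mem_latA.1 this
    simp at h0 h1 h2 h3
    have : ((n + 1 : ℕ) : ℤ) ∣ ((m + 1 : ℕ) : ℤ) := ⟨s, by push_cast; linarith⟩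
    exact_mod_cast this
  intro m n h
  have := Nat.dvd_antisymm (key m n h) (key n m h.symm)
  omega

lemma latA_rank (m : ℕ) : latticeRank (latA m) = 2 := by
  refine latticeRank_span_pair _ _ fun s t h => ?_
  have h1 := congrFun h 1
  have h2 := congrFun h 2
  simp at h1 h2
  refine ⟨h1.resolve_right ?_, h2⟩
  omega

lemma quarticLattice_rank : latticeRank quarticLattice = 2 := by
  refine latticeRank_span_pair _ _ fun s t h => ?_
  have h1 := congrFun h 3
  have h2 := congrFun h 2
  simp at h1 h2
  omega

lemma toNat_mul_four (M : ℕ) (s : ℤ) : (4 * ((M : ℤ) * s)).toNat = 4 * M * s.toNat := by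
  rcases le_total 0 s with hs | hs
  · lift s to ℕ using hs
    simp only [Int.toNat_natCast]
    rw [show (4 * ((M : ℤ) * s)) = ((4 * M * s : ℕ) : ℤ) by push_cast; ring, Int.toNat_natCast]
  · rw [Int.toNat_of_nonpos hs, mul_zero, Int.toNat_eq_zero]
    have : (M : ℤ) * s ≤ 0 := mul_nonpos_of_nonneg_of_nonpos (by positivity) hs
    omega

/-- Modulo the two generators every `x^{u₊}` and `x^{u₋}` with `u` in the lattice can be rewritten
as a monomial in `x₀, x₃`, because the exponents of `x₁` and `x₂` are multiples of `4M` and `4`. The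
two resulting monomials agree. -/
lemma latA_isCI (k : Type*) [Field k] (m : ℕ) : IsCI (latticeIdeal k (latA m)) 2 := by
  refine ⟨![(X 0 ^ 3 * X 3) ^ (m + 1) - X 1 ^ (4 * (m + 1)), X 0 * X 3 ^ 3 - X 2 ^ 4], ?_⟩
  rw [Matrix.range_cons, Matrix.range_cons, Matrix.range_empty, Set.union_empty]
  apply le_antisymm
  · rw [Ideal.span_le]
    rintro _ (rfl | rfl)
    · have := latticeBinomial_mem k (L := latA m) (u := ![3 * (m + 1), -4 * (m + 1), 0, m + 1])
        (Submodule.subset_span (by simp))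
      rw [latticeBinomial_eq] at this
      convert this using 1
      simp only [Matrix.cons_val]
      rw [show (3 * ((m : ℤ) + 1)).toNat = 3 * (m + 1) by omega,
        show (-4 * ((m : ℤ) + 1)).toNat = 0 by omega,
        show ((m : ℤ) + 1).toNat = m + 1 by omega,
        show (-(3 * ((m : ℤ) + 1))).toNat = 0 by omega,
        show (-(-4 * ((m : ℤ) + 1))).toNat = 4 * (m + 1) by omega,
        show (-((m : ℤ) + 1)).toNat = 0 by omega]
      simp
      ring_nf
    · have := latticeBinomial_mem k (L := latA m) (u := ![1, 0, -4, 3])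
        (Submodule.subset_span (by simp))
      rw [latticeBinomial_eq] at this
      simpa using this
  · rw [latticeIdeal, Ideal.span_le]
    rintro _ ⟨u, hu, rfl⟩
    obtain ⟨s, t, h0, h1, h2, h3⟩ := mem_latA.1 hu
    rw [latticeBinomial_eq, SetLike.mem_coe]
    set J : Ideal (MvPolynomial (Fin 4) k) := Ideal.span _
    have m1 : (X 0 ^ 3 * X 3) ^ (m + 1) - X 1 ^ (4 * (m + 1)) ∈ J := Ideal.subset_span (Or.inl rfl)
    have m2 : X 0 * X 3 ^ 3 - X 2 ^ 4 ∈ J := Ideal.subset_span (Or.inr rfl)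
    have g1 := (Ideal.Quotient.mk_eq_mk_iff_sub_mem _ _).2 m1
    have g2 := (Ideal.Quotient.mk_eq_mk_iff_sub_mem _ _).2 m2
    rw [← Ideal.Quotient.mk_eq_mk_iff_sub_mem]
    simp only [map_mul, map_pow] at g1 g2 ⊢
    generalize Ideal.Quotient.mk J (X 0) = a at *
    generalize Ideal.Quotient.mk J (X 1) = b at *
    generalize Ideal.Quotient.mk J (X 2) = c at *
    generalize Ideal.Quotient.mk J (X 3) = d at *
    have p1 : (u 1).toNat = 4 * (m + 1) * (-s).toNat := by
      rw [← toNat_mul_four, h1]; push_cast; congr 1; ring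
    have p1' : (-u 1).toNat = 4 * (m + 1) * s.toNat := by
      rw [← toNat_mul_four, h1]; push_cast; congr 1; ring
    have p2 : (u 2).toNat = 4 * (-t).toNat := by omega
    have p2' : (-u 2).toNat = 4 * t.toNat := by omega
    rw [p1, p1', p2, p2', pow_mul b _ (-s).toNat, pow_mul b _ s.toNat,
      pow_mul c, pow_mul c, ← g1, ← g2]
    have hs : ((m : ℤ) + 1) * s = ((m + 1) * s.toNat : ℕ) - ((m + 1) * (-s).toNat : ℕ) := by
      push_cast
      rw [← mul_sub, Int.toNat_sub_toNat_neg]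
    have q0 : (u 0).toNat + 3 * ((m + 1) * (-s).toNat) + (-t).toNat
        = (-u 0).toNat + 3 * ((m + 1) * s.toNat) + t.toNat := by omega
    have q3 : (u 3).toNat + (m + 1) * (-s).toNat + 3 * (-t).toNat
        = (-u 3).toNat + (m + 1) * s.toNat + 3 * t.toNat := by omega
    calc _ = a ^ ((u 0).toNat + 3 * ((m + 1) * (-s).toNat) + (-t).toNat)
          * d ^ ((u 3).toNat + (m + 1) * (-s).toNat + 3 * (-t).toNat) := by ring
      _ = _ := by rw [q0, q3]; ring

/-- The cocycle comes from the missing monomial `s²t²` of the semigroup ring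
`k[s⁴, s³t, st³, t⁴]`. -/
lemma quarticLattice_not_isCM (k : Type*) [Field k] :
    ¬ IsCMLatticeQuotient k quarticLattice := by
  refine not_isCM_of_cocycle k quarticLattice_rank quarticLattice_pos
    ![X 1 ^ 2, X 0 * X 2, X 1 * X 3, X 2 ^ 2] 2 ?_ rfl ?_
  · have hb : ∀ u, 4 * u 0 + 3 * u 1 + u 2 = 0 ∧ u 1 + 3 * u 2 + 4 * u 3 = 0 →
        latticeBinomial k u ∈ latticeIdeal k quarticLattice := fun u hu =>
      latticeBinomial_mem k (mem_quarticLattice.2 hu)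
    have b1 := hb ![2, -3, 1, 0] (by simp)
    have b2 := hb ![1, -1, -1, 1] (by simp)
    have b3 := hb ![1, -2, 2, -1] (by simp)
    have b4 := hb ![0, -1, 3, -2] (by simp)
    rw [latticeBinomial_eq] at b1 b2 b3 b4
    simp at b1 b2 b3 b4
    set I := latticeIdeal k quarticLattice
    intro i j hij
    fin_cases i <;> fin_cases j <;> simp at hij ⊢
    · convert b1 using 1; ring
    · convert I.mul_mem_left (X 1) b2 using 1; ring
    · convert b3 using 1; ring
    · convert I.neg_mem b3 using 1; ring
    · convert I.neg_mem (I.mul_mem_left (X 2) b2) using 1; ring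
    · convert b4 using 1; ring
  · intro u hu
    rw [mem_quarticLattice] at hu
    intro h0 h2 h3 h1
    push_cast
    by_contra hcon
    have : u 1 = -1 ∨ u 1 = -2 := by omega
    omega

end FamilyA

/-! ### Non-Cohen–Macaulay sublattices of a complete intersection -/

section FamilyB

/-- The lattice spanned by `(1,-1,0,0)` and `(0,0,1,-1)`, with ideal `(x₀ - x₁, x₂ - x₃)`. -/
def planeLattice : Submodule ℤ (Fin 4 → ℤ) :=
  Submodule.span ℤ {![1, -1, 0, 0], ![0, 0, 1, -1]}

lemma mem_planeLattice {u : Fin 4 → ℤ} :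
    u ∈ planeLattice ↔ u 1 = - u 0 ∧ u 3 = - u 2 := by
  rw [planeLattice, Submodule.mem_span_pair]
  constructor
  · rintro ⟨a, b, rfl⟩
    simp
  · rintro ⟨h1, h2⟩
    refine ⟨u 0, u 2, ?_⟩
    ext i
    fin_cases i <;> simp [h1, h2]

/-- The index `r + 2` sublattice `{(i, -i, j, -j) : i ≡ j mod r + 2}` of `planeLattice`. -/
def latB (r : ℕ) : Submodule ℤ (Fin 4 → ℤ) :=
  Submodule.span ℤ {![(r : ℤ) + 2, -(r + 2), 0, 0], ![1, -1, 1, -1]}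

lemma mem_latB {r : ℕ} {u : Fin 4 → ℤ} :
    u ∈ latB r ↔ u 1 = - u 0 ∧ u 3 = - u 2 ∧ (r + 2 : ℤ) ∣ u 0 - u 2 := by
  rw [latB, Submodule.mem_span_pair]
  constructor
  · rintro ⟨s, t, rfl⟩
    exact ⟨by simp; ring, by simp, s, by simp; ring⟩
  · rintro ⟨h1, h2, s, hs⟩
    refine ⟨s, u 2, ?_⟩
    ext i
    fin_cases i <;> simp [h1, h2] <;> linarith

lemma latB_pos (r : ℕ) : IsPositiveLattice (latB r) := by
  intro u hu h
  obtain ⟨h1', h3', -⟩ := mem_latB.1 hu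
  have h0 := h 0
  have h1 := h 1
  have h2 := h 2
  have h3 := h 3
  ext i
  fin_cases i <;> simp <;> omega

lemma saturation_latB (r : ℕ) : saturation (latB r) = planeLattice := by
  ext u
  rw [mem_planeLattice]
  constructor
  · rintro ⟨N, hN, hu⟩
    obtain ⟨h1, h2, -⟩ := mem_latB.1 hu
    simp only [Pi.smul_apply, smul_eq_mul] at h1 h2
    have hN' : (N : ℤ) ≠ 0 := by exact_mod_cast hN.ne'
    exact ⟨mul_left_cancel₀ hN' (by linarith), mul_left_cancel₀ hN' (by linarith)⟩
  · rintro ⟨h1, h2⟩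
    refine ⟨r + 2, by omega, mem_latB.2 ⟨?_, ?_, u 0 - u 2, ?_⟩⟩ <;>
      simp [h1, h2]
    ring

lemma latB_injective : Function.Injective latB := by
  have key : ∀ m n, latB m = latB n → n + 2 ∣ m + 2 := by
    intro m n h
    have : ![(m : ℤ) + 2, -(m + 2), 0, 0] ∈ latB n :=
      h ▸ Submodule.subset_span (by simp)
    obtain ⟨-, -, h0⟩ := mem_latB.1 this
    simp at h0
    exact_mod_cast h0
  intro m n h
  have := Nat.dvd_antisymm (key m n h) (key n m h.symm)
  omega

lemma latB_rank (r : ℕ) : latticeRank (latB r) = 2 := by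
  refine latticeRank_span_pair _ _ fun s t h => ?_
  have h1 := congrFun h 0
  have h2 := congrFun h 2
  simp at h1 h2
  subst h2
  refine ⟨?_, rfl⟩
  simp at h1
  exact h1.resolve_right (by omega)

lemma planeLattice_isCI (k : Type*) [Field k] : IsCI (latticeIdeal k planeLattice) 2 := by
  refine ⟨![X 0 - X 1, X 2 - X 3], ?_⟩
  rw [Matrix.range_cons, Matrix.range_cons, Matrix.range_empty, Set.union_empty]
  apply le_antisymm
  · rw [Ideal.span_le]
    rintro _ (rfl | rfl)
    · have := latticeBinomial_mem k (L := planeLattice) (u := ![1, -1, 0, 0])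
        (Submodule.subset_span (by simp))
      rw [latticeBinomial_eq] at this
      simpa using this
    · have := latticeBinomial_mem k (L := planeLattice) (u := ![0, 0, 1, -1])
        (Submodule.subset_span (by simp))
      rw [latticeBinomial_eq] at this
      simpa using this
  · rw [latticeIdeal, Ideal.span_le]
    rintro _ ⟨u, hu, rfl⟩
    obtain ⟨h1, h3⟩ := mem_planeLattice.1 hu
    rw [latticeBinomial_eq, SetLike.mem_coe]
    set J : Ideal (MvPolynomial (Fin 4) k) := Ideal.span _
    have m1 : X 0 - X 1 ∈ J := Ideal.subset_span (Or.inl rfl)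
    have m2 : X 2 - X 3 ∈ J := Ideal.subset_span (Or.inr rfl)
    have g1 := (Ideal.Quotient.mk_eq_mk_iff_sub_mem _ _).2 m1
    have g2 := (Ideal.Quotient.mk_eq_mk_iff_sub_mem _ _).2 m2
    rw [← Ideal.Quotient.mk_eq_mk_iff_sub_mem]
    simp only [map_mul, map_pow, g1, g2, h1, h3, neg_neg]
    ring

/-- The cocycle comes from the element `x₀^{r+1}/x₁` of the localized quotient ring, which is
multiplied into the quotient ring by every variable. -/
lemma latB_not_isCM (k : Type*) [Field k] (r : ℕ) : ¬ IsCMLatticeQuotient k (latB r) := by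
  refine not_isCM_of_cocycle k (latB_rank r) (latB_pos r)
    ![X 1 ^ (r + 1), X 0 ^ (r + 1), X 0 ^ r * X 3, X 1 ^ r * X 2] (r + 1) ?_ rfl ?_
  · have hb : ∀ u, (u 1 = - u 0 ∧ u 3 = - u 2 ∧ (r + 2 : ℤ) ∣ u 0 - u 2) →
        latticeBinomial k u ∈ latticeIdeal k (latB r) := fun u hu =>
      latticeBinomial_mem k (mem_latB.2 hu)
    have b1 := hb ![r + 2, -(r + 2), 0, 0] (by simp)
    have b2 := hb ![1, -1, 1, -1] (by simp)
    have b3 := hb ![r + 1, -(r + 1), -1, 1] (by simp; ring_nf; simp)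
    have b4 := hb ![r, -r, -2, 2] (by simp)
    rw [latticeBinomial_eq] at b1 b2 b3 b4
    have c1 : ((r : ℤ) + 2).toNat = r + 2 := by omega
    have c1' : (-((r : ℤ) + 2)).toNat = 0 := by omega
    have c2 : ((r : ℤ) + 1).toNat = r + 1 := by omega
    have c2' : (-((r : ℤ) + 1)).toNat = 0 := by omega
    have c3' : (-(r : ℤ)).toNat = 0 := by omega
    simp only [Matrix.cons_val, c1, c1', c2, c2', c3', neg_neg] at b1 b2 b3 b4
    simp at b1 b2 b3 b4
    set I := latticeIdeal k (latB r)
    intro i j hij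
    fin_cases i <;> fin_cases j <;> simp at hij ⊢
    · convert b1 using 1; ring
    · convert b3 using 1; ring
    · convert I.mul_mem_left (X 1 ^ r) b2 using 1; ring
    · convert I.neg_mem (I.mul_mem_left (X 0 ^ r) b2) using 1; ring
    · convert I.neg_mem b3 using 1; ring
    · convert I.neg_mem b4 using 1; ring
  · intro u hu h0 h2 h3 h1
    obtain ⟨e1, e3, e⟩ := mem_latB.1 hu
    have e2 : u 2 = 0 := by omega
    rw [e2, sub_zero] at e
    have := Int.le_of_dvd (by omega) e
    push_cast
    omega

end FamilyB

/-- Theorem `thm:codim2case`: there are infinitely many rank-2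
positive non-saturated lattices `L ⊆ ℤⁿ` (for various `n`) such that (a) `I_L` is a
complete intersection while `k[x]/I_{L^sat}` is not Cohen–Macaulay, and (b) `k[x]/I_L`
is not Cohen–Macaulay while `I_{L^sat}` is a complete intersection. -/
theorem statement5 (k : Type*) [Field k] :
    {p : (n : ℕ) × Submodule ℤ (Fin n → ℤ) |
        IsPositiveLattice p.2 ∧ latticeRank p.2 = 2 ∧ saturation p.2 ≠ p.2 ∧
          IsCI (latticeIdeal k p.2) 2 ∧
            ¬ IsCMLatticeQuotient k (saturation p.2)}.Infinite ∧
    {p : (n : ℕ) × Submodule ℤ (Fin n → ℤ) |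
        IsPositiveLattice p.2 ∧ latticeRank p.2 = 2 ∧ saturation p.2 ≠ p.2 ∧
          ¬ IsCMLatticeQuotient k p.2 ∧
            IsCI (latticeIdeal k (saturation p.2)) 2}.Infinite := by
  constructor
  · refine Set.infinite_of_injective_forall_mem
      (f := fun m : ℕ => (⟨4, latA m⟩ : (n : ℕ) × Submodule ℤ (Fin n → ℤ))) ?_ ?_
    · intro m n h
      exact latA_injective (eq_of_heq (Sigma.mk.inj h).2)
    · intro m
      refine ⟨fun u hu => quarticLattice_pos u (latA_le m hu), latA_rank m, ?_,
        latA_isCI k m, ?_⟩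
      · rw [saturation_latA]
        intro h
        have hmem : ![1, -1, -1, 1] ∈ latA m := by
          change quarticLattice = latA m at h
          exact h ▸ mem_quarticLattice.2 (by simp)
        obtain ⟨s, t, h0, h1, h2, h3⟩ := mem_latA.1 hmem
        simp at h2
        omega
      · rw [saturation_latA]
        exact quarticLattice_not_isCM k
  · refine Set.infinite_of_injective_forall_mem
      (f := fun r : ℕ => (⟨4, latB r⟩ : (n : ℕ) × Submodule ℤ (Fin n → ℤ))) ?_ ?_
    · intro m n h
      exact latB_injective (eq_of_heq (Sigma.mk.inj h).2)
    · intro r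
      refine ⟨latB_pos r, latB_rank r, ?_, latB_not_isCM k r, ?_⟩
      · rw [saturation_latB]
        intro h
        have hmem : ![1, -1, 0, 0] ∈ latB r := by
          change planeLattice = latB r at h
          exact h ▸ mem_planeLattice.2 (by simp)
        obtain ⟨-, -, h2⟩ := mem_latB.1 hmem
        have := Int.le_of_dvd (by simp) h2
        simp at this
        omega
      · rw [saturation_latB]
        exact planeLattice_isCI k
end

section
/- Let B ∈ ℤ^{n×m} be of full rank m with ℤB a positive lattice, let Γ = ℤ^n/ℤB, and let C be a fiber (congruence class of ℤ^n modulo ℤB). Then the multigraded Betti number β_{j+1,C}(k[x]/I_{ℤB}) equals the rank over k of the j-th reduced simplicial homology group H̃_j(Δ_C; k) of the simplicial complex Δ_C. -/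
/-!
The Betti number is compared with simplicial homology through the double complex computing
`Tor(k[x]/I_L, k)`, namely the tensor product of the Koszul complex on `x_1, …, x_n` with the
minimal resolution `F`, in the single `Γ`-degree `C`.  Its term at `(p, q)` consists of the elements
of `⋀^q k[x]^n ⊗ F_p` of degree `C` (`koszulPart`).

The rows are exact at `p ≥ 1` because `F` is an exact complex of homogeneous maps, and the columns
are exact at `q ≥ 1` by an explicit contracting homotopy of the Koszul complex, built from the
smallest index dividing a term (`koszul_exact`).  Dimension shifting along the staircase from
`(0, j + 1)` to `(j + 1, 0)` (`ExactDC.staircase`) equates the dimensions of cycles modulo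
boundaries at its two ends.

* At `(j + 1, 0)`, the cokernel of the Koszul differential is spanned by constants, and by minimality
  the differential of `F` is zero on it; the dimension is the number of generators of `F_{j+1}` of
  degree `C` (`generators_rank`).
* At `(0, j + 1)`, the cokernel of the row is the degree `C` part of `⋀^{j+1} k[x]^n ⊗ k[x]/I_L`.  A
  graded piece of `k[x]/I_L` is one-dimensional when it contains a monomial and zero otherwise, and
  the class of a homogeneous polynomial is determined by its value at `(1, …, 1)`
  (`mem_latticeIdeal_of_eval`).  Hence `e_S` contributes one dimension exactly when
  `C - deg x^S` is the degree of a monomial, that is, when `S` is a face of `Δ_C`.  The Koszul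
  differential becomes the simplicial boundary (`faceEval_surj`, `faceEval_ker`, `faceEval_comm`),
  so the dimension is that of the reduced homology of `Δ_C` in degree `j` (`ExactDC.augment`).
-/

open MvPolynomial

/-! ### Dimensions of subquotients -/

section Algebra
variable {k : Type*} [Field k]

/-- The dimension of the subquotient `Z / (Z ∩ B)` of a vector space. -/
noncomputable def subquotRank {U : Type*} [AddCommGroup U] [Module k U] (Z B : Submodule k U) : ℕ :=
  Module.finrank k (Z ⧸ B.comap Z.subtype)

theorem subquotRank_range {W U : Type*} [AddCommGroup W] [Module k W]
    [AddCommGroup U] [Module k U] (f : W →ₗ[k] U) (B : Submodule k U) :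
    subquotRank (LinearMap.range f) B = Module.finrank k (W ⧸ B.comap f) := by
  set φ := (B.comap (LinearMap.range f).subtype).mkQ ∘ₗ f.rangeRestrict
  have hφ : Function.Surjective φ :=
    (Submodule.mkQ_surjective _).comp f.surjective_rangeRestrict
  have hk : LinearMap.ker φ = B.comap f := by
    ext w
    simp [φ]
  rw [← hk]
  exact (φ.quotKerEquivOfSurjective hφ).finrank_eq.symm

/-- Two subquotients have the same dimension if they are linked by a correspondence: a space `W`
surjecting onto both `Z₁` and `Z₂` for which the preimages of `B₁` and `B₂` coincide. -/
theorem subquotRank_eq {W U V : Type*} [AddCommGroup W] [Module k W]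
    [AddCommGroup U] [Module k U] [AddCommGroup V] [Module k V]
    (f : W →ₗ[k] U) (g : W →ₗ[k] V) {Z₁ B₁ : Submodule k U} {Z₂ B₂ : Submodule k V}
    (h₁ : LinearMap.range f = Z₁) (h₂ : LinearMap.range g = Z₂)
    (hB : ∀ w, f w ∈ B₁ ↔ g w ∈ B₂) : subquotRank Z₁ B₁ = subquotRank Z₂ B₂ := by
  subst h₁ h₂
  rw [subquotRank_range, subquotRank_range]
  have : B₁.comap f = B₂.comap g := by
    ext w
    exact hB w
  rw [this]

theorem subquotRank_of_le {U : Type*} [AddCommGroup U] [Module k U] [FiniteDimensional k U]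
    {Z B : Submodule k U} (h : B ≤ Z) :
    subquotRank Z B = Module.finrank k Z - Module.finrank k B := by
  have h1 := (B.comap Z.subtype).finrank_quotient_add_finrank
  have h2 := (Submodule.comapSubtypeEquivOfLe h).finrank_eq
  unfold subquotRank
  omega

end Algebra

/-! ### Dimension shifting in a double complex -/

section DoubleComplex

variable {k : Type*} [Field k] {E : ℕ → Type*} [∀ p, AddCommGroup (E p)] [∀ p, Module k (E p)]

/-- A first quadrant double complex with pieces `X p q ⊆ E p`, horizontal differential
`d : X (p + 1) q → X p q` and vertical differential `δ : X p (q + 1) → X p q` (commuting, rather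
than anticommuting).  The differentials are defined on all of `E p`, independently of `q`.
Rows are exact at `p ≥ 1`, columns are exact at `q ≥ 1`, and `minimal` says that `d` induces zero
on the cokernels of the columns. -/
structure ExactDC (X : ∀ p, ℕ → Submodule k (E p)) (d : ∀ p, E (p + 1) →ₗ[k] E p)
    (δ : ∀ p, E p →ₗ[k] E p) : Prop where
  d_mem : ∀ p q x, x ∈ X (p + 1) q → d p x ∈ X p q
  δ_mem : ∀ p q x, x ∈ X p (q + 1) → δ p x ∈ X p q
  δ_zero : ∀ p x, x ∈ X p 0 → δ p x = 0
  comm : ∀ p x, d p (δ (p + 1) x) = δ p (d p x)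
  d_d : ∀ p x, d p (d (p + 1) x) = 0
  δ_δ : ∀ p x, δ p (δ p x) = 0
  d_exact : ∀ p q x, x ∈ X (p + 1) q → d p x = 0 → ∃ y ∈ X (p + 2) q, d (p + 1) y = x
  δ_exact : ∀ p q x, x ∈ X p (q + 1) → δ p x = 0 → ∃ y ∈ X p (q + 2), δ p y = x
  minimal : ∀ p y, y ∈ X (p + 1) 0 → ∃ x ∈ X p 1, δ p x = d p y

/-- The elements of `X p q` that are cycles for `δ` modulo the image of `d`.  For `q = 0` the
truncated index `q - 1 = 0` is harmless, since `δ` vanishes on `X p 0`. -/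
def dcCycles (X : ∀ p, ℕ → Submodule k (E p)) (d : ∀ p, E (p + 1) →ₗ[k] E p)
    (δ : ∀ p, E p →ₗ[k] E p) (p q : ℕ) : Submodule k (E p) :=
  X p q ⊓ ((X (p + 1) (q - 1)).map (d p)).comap (δ p)

/-- The sum of the images of `d` and `δ` in `X p q`. -/
def dcBoundaries (X : ∀ p, ℕ → Submodule k (E p)) (d : ∀ p, E (p + 1) →ₗ[k] E p)
    (δ : ∀ p, E p →ₗ[k] E p) (p q : ℕ) : Submodule k (E p) :=
  (X (p + 1) q).map (d p) ⊔ (X p (q + 1)).map (δ p)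

variable {X : ∀ p, ℕ → Submodule k (E p)} {d : ∀ p, E (p + 1) →ₗ[k] E p}
    {δ : ∀ p, E p →ₗ[k] E p}

theorem mem_dcBoundaries {p q : ℕ} {x : E p} : x ∈ dcBoundaries X d δ p q ↔
    ∃ a ∈ X (p + 1) q, ∃ b ∈ X p (q + 1), d p a + δ p b = x := by
  simp [dcBoundaries, Submodule.mem_sup]

theorem mem_dcCycles {p q : ℕ} {x : E p} : x ∈ dcCycles X d δ p q ↔
    x ∈ X p q ∧ ∃ y ∈ X (p + 1) (q - 1), d p y = δ p x := by
  simp [dcCycles]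

/-- One step of the staircase: the relation `d y = δ x` between `x ∈ X p (q + 1)` and
`y ∈ X (p + 1) q` identifies the cycles modulo boundaries at `(p, q + 1)` with those at
`(p + 1, q)`. -/
theorem ExactDC.step (h : ExactDC X d δ) (p q : ℕ) :
    subquotRank (dcCycles X d δ p (q + 1)) (dcBoundaries X d δ p (q + 1)) =
      subquotRank (dcCycles X d δ (p + 1) q) (dcBoundaries X d δ (p + 1) q) := by
  -- The correspondence: pairs `(x, y)` with `d y = δ x`.
  let W : Submodule k (E p × E (p + 1)) :=
    (X p (q + 1)).prod (X (p + 1) q) ⊓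
      LinearMap.ker (d p ∘ₗ LinearMap.snd k _ _ - δ p ∘ₗ LinearMap.fst k _ _)
  have hW : ∀ x y, (x, y) ∈ W ↔ (x ∈ X p (q + 1) ∧ y ∈ X (p + 1) q) ∧ d p y = δ p x := by
    intro x y
    simp [W, sub_eq_zero]
  refine subquotRank_eq (W := W) (LinearMap.fst k _ _ ∘ₗ W.subtype)
    (LinearMap.snd k _ _ ∘ₗ W.subtype) ?_ ?_ ?_
  · ext x
    rw [mem_dcCycles]
    constructor
    · rintro ⟨⟨⟨x, y⟩, hw⟩, rfl⟩
      obtain ⟨⟨h1, h2⟩, h3⟩ := (hW _ _).1 hw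
      exact ⟨h1, y, h2, h3⟩
    · rintro ⟨h1, y, h2, h3⟩
      exact ⟨⟨(x, y), (hW _ _).2 ⟨⟨h1, h2⟩, h3⟩⟩, rfl⟩
  · ext y
    rw [mem_dcCycles]
    constructor
    · rintro ⟨⟨⟨x, y⟩, hw⟩, rfl⟩
      obtain ⟨⟨h1, h2⟩, h3⟩ := (hW _ _).1 hw
      refine ⟨h2, ?_⟩
      change ∃ z ∈ X (p + 1 + 1) (q - 1), d (p + 1) z = δ (p + 1) y
      cases q with
      | zero => exact ⟨0, zero_mem _, by rw [map_zero, h.δ_zero _ _ h2]⟩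
      | succ r =>
        refine h.d_exact _ _ _ (h.δ_mem _ _ _ h2) ?_
        rw [h.comm, h3, h.δ_δ]
    · rintro ⟨h1, z, h2, h3⟩
      obtain ⟨x, hx, hxy⟩ : ∃ x ∈ X p (q + 1), δ p x = d p y := by
        cases q with
        | zero => exact h.minimal _ _ h1
        | succ r =>
          refine h.δ_exact _ _ _ (h.d_mem _ _ _ h1) ?_
          rw [← h.comm, ← h3, h.d_d]
      exact ⟨⟨(x, y), (hW _ _).2 ⟨⟨hx, h1⟩, hxy.symm⟩⟩, rfl⟩
  · rintro ⟨⟨x, y⟩, hw⟩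
    obtain ⟨⟨h1, h2⟩, h3⟩ := (hW _ _).1 hw
    change x ∈ dcBoundaries X d δ p (q + 1) ↔ y ∈ dcBoundaries X d δ (p + 1) q
    rw [mem_dcBoundaries, mem_dcBoundaries]
    constructor
    · rintro ⟨a, ha, b, hb, rfl⟩
      obtain ⟨z, hz, hzy⟩ := h.d_exact p q (y - δ (p + 1) a)
        (sub_mem h2 (h.δ_mem _ _ _ ha)) (by
          rw [map_sub, h3, h.comm, map_add, h.δ_δ, add_zero, sub_self])
      exact ⟨z, hz, a, ha, by rw [hzy, sub_add_cancel]⟩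
    · rintro ⟨a, ha, b, hb, rfl⟩
      obtain ⟨z, hz, hzy⟩ := h.δ_exact p q (x - d p b)
        (sub_mem h1 (h.d_mem _ _ _ hb)) (by
          rw [map_sub, ← h3, ← h.comm, map_add, h.d_d, zero_add, sub_self])
      exact ⟨b, hb, z, hz, by rw [hzy, add_sub_cancel]⟩

/-- Iterating `ExactDC.step` moves the subquotient at `(p, q)` to the bottom row. -/
theorem ExactDC.staircase (h : ExactDC X d δ) (q p : ℕ) :
    subquotRank (dcCycles X d δ p q) (dcBoundaries X d δ p q) =
      subquotRank (dcCycles X d δ (p + q) 0) (dcBoundaries X d δ (p + q) 0) := by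
  induction q generalizing p with
  | zero => rfl
  | succ q ih =>
    have e : p + (q + 1) = (p + 1) + q := by omega
    rw [h.step, ih, e]

/-- If maps `Ψ q` identify the cokernels of the rows `X 1 q → X 0 q` with a complex `(Y, D)`, then
the subquotient at `(0, q + 1)` is the homology of `(Y, D)` at `Y (q + 1)`. -/
theorem ExactDC.augment (h : ExactDC X d δ) {Y : ℕ → Type*} [∀ q, AddCommGroup (Y q)]
    [∀ q, Module k (Y q)] (D : ∀ q, Y (q + 1) →ₗ[k] Y q) (Ψ : ∀ q, E 0 →ₗ[k] Y q)
    (surj : ∀ q y, ∃ x ∈ X 0 q, Ψ q x = y)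
    (ker : ∀ q, ∀ x ∈ X 0 q, Ψ q x = 0 ↔ ∃ y ∈ X 1 q, d 0 y = x)
    (comm : ∀ q, ∀ x ∈ X 0 (q + 1), D q (Ψ (q + 1) x) = Ψ q (δ 0 x)) (q : ℕ) :
    LinearMap.range (D (q + 1)) ≤ LinearMap.ker (D q) ∧
    subquotRank (dcCycles X d δ 0 (q + 1)) (dcBoundaries X d δ 0 (q + 1)) =
      subquotRank (LinearMap.ker (D q)) (LinearMap.range (D (q + 1))) := by
  refine ⟨?_, ?_⟩
  · rintro _ ⟨z, rfl⟩
    obtain ⟨b, hb, rfl⟩ := surj _ z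
    rw [LinearMap.mem_ker, comm _ _ hb, comm _ _ (h.δ_mem _ _ _ hb), h.δ_δ, map_zero]
  · refine subquotRank_eq (Submodule.subtype _) (Ψ (q + 1) ∘ₗ Submodule.subtype _)
      (Submodule.range_subtype _) ?_ ?_
    · ext y
      rw [LinearMap.mem_ker]
      constructor
      · rintro ⟨⟨x, hx⟩, rfl⟩
        obtain ⟨hx, y, hy, hxy⟩ := mem_dcCycles.1 hx
        change D q (Ψ (q + 1) x) = 0
        rw [comm _ _ hx]
        exact (ker _ _ (h.δ_mem _ _ _ hx)).2 ⟨y, hy, hxy⟩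
      · intro hy
        obtain ⟨x, hx, rfl⟩ := surj _ y
        rw [comm _ _ hx] at hy
        exact ⟨⟨x, mem_dcCycles.2 ⟨hx, (ker _ _ (h.δ_mem _ _ _ hx)).1 hy⟩⟩, rfl⟩
    · rintro ⟨x, hx⟩
      have hx := (mem_dcCycles.1 hx).1
      change x ∈ dcBoundaries X d δ 0 (q + 1) ↔ Ψ (q + 1) x ∈ LinearMap.range (D (q + 1))
      rw [mem_dcBoundaries]
      constructor
      · rintro ⟨a, ha, b, hb, rfl⟩
        refine ⟨Ψ _ b, ?_⟩
        rw [comm _ _ hb, map_add, (ker _ _ (h.d_mem _ _ _ ha)).2 ⟨a, ha, rfl⟩, zero_add]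
      · rintro ⟨z, hz⟩
        obtain ⟨b, hb, rfl⟩ := surj _ z
        rw [comm _ _ hb] at hz
        obtain ⟨a, ha, hab⟩ := (ker _ (x - δ 0 b) (sub_mem hx (h.δ_mem _ _ _ hb))).1
          (by rw [map_sub, hz, sub_self])
        exact ⟨a, ha, b, hb, by rw [hab, sub_add_cancel]⟩

end DoubleComplex

/-! ### The Koszul differential and its exactness -/

section Koszul
variable {k : Type*} [Field k] {n : ℕ}

/-- The sign `(-1)^{#{x ∈ S : x < i}}` with which `i` is removed from `S`. -/
def ksign (k : Type*) [Field k] {n : ℕ} (i : Fin n) (S : Finset (Fin n)) : k :=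
  (-1) ^ (S.filter fun x => x < i).card

theorem ksign_insert_self (i : Fin n) (S : Finset (Fin n)) :
    ksign k i (insert i S) = ksign k i S := by
  simp [ksign, Finset.filter_insert]

theorem ksign_insert_lt {i j : Fin n} {S : Finset (Fin n)} (hj : j ∉ S) (h : j < i) :
    ksign k i (insert j S) = - ksign k i S := by
  simp [ksign, Finset.filter_insert, h, hj, pow_succ]

theorem ksign_insert_gt {i j : Fin n} {S : Finset (Fin n)} (h : i < j) :
    ksign k i (insert j S) = ksign k i S := by
  simp [ksign, Finset.filter_insert, h.not_gt]

theorem ksign_swap {i j : Fin n} {T : Finset (Fin n)} (hi : i ∉ T) (hj : j ∉ T) (hij : i ≠ j) :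
    ksign k i (insert i T) * ksign k j (insert j (insert i T)) =
      - (ksign k j (insert j T) * ksign k i (insert i (insert j T))) := by
  simp only [ksign_insert_self]
  rcases lt_or_gt_of_ne hij with h | h
  · rw [ksign_insert_lt hi h, ksign_insert_gt h]; ring
  · rw [ksign_insert_lt hj h, ksign_insert_gt h]; ring

/-- The Koszul differential on `⋀ k[x]^n ⊗ k[x]^τ`.  An element is a function `x`, where `x S g` is
the coefficient of `e_S ⊗ g`, and `e_S ↦ ∑_{i ∈ S} ± x_i e_{S ∖ i}`.  All exterior degrees
are kept in one space. -/
noncomputable def koszul (k : Type*) [Field k] (n : ℕ) (τ : Type*) :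
    (Finset (Fin n) → τ → MvPolynomial (Fin n) k) →ₗ[k]
      (Finset (Fin n) → τ → MvPolynomial (Fin n) k) where
  toFun x T g := ∑ i ∈ Tᶜ, ksign k i (insert i T) • (X i * x (insert i T) g)
  map_add' x y := by
    funext T g
    simp [mul_add, Finset.sum_add_distrib]
  map_smul' c x := by
    funext T g
    simp only [Pi.smul_apply, RingHom.id_apply, Finset.smul_sum, mul_smul_comm]
    exact Finset.sum_congr rfl fun i _ => smul_comm _ _ _

theorem koszul_apply {τ : Type*} (x : Finset (Fin n) → τ → MvPolynomial (Fin n) k) (T g) :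
    koszul k n τ x T g = ∑ i ∈ Tᶜ, ksign k i (insert i T) • (X i * x (insert i T) g) := rfl

theorem koszul_koszul {τ : Type*} (x : Finset (Fin n) → τ → MvPolynomial (Fin n) k) :
    koszul k n τ (koszul k n τ x) = 0 := by
  funext T g
  simp only [koszul_apply, Finset.mul_sum, Finset.smul_sum, Pi.zero_apply]
  rw [Finset.sum_sigma']
  refine Finset.sum_involution (fun a _ => ⟨a.2, a.1⟩) ?_ ?_ ?_ ?_
  · rintro ⟨i, j⟩ h
    simp only [Finset.mem_sigma, Finset.mem_compl, Finset.mem_insert, not_or] at h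
    obtain ⟨hi, hji, hj⟩ := h
    simp only [mul_smul_comm, smul_smul]
    rw [ksign_swap hi hj (Ne.symm hji), Finset.insert_comm j i, neg_smul, mul_left_comm,
      neg_add_cancel]
  · rintro ⟨i, j⟩ h _ heq
    simp only [Finset.mem_sigma, Finset.mem_compl, Finset.mem_insert, not_or] at h
    simp only [Sigma.mk.injEq] at heq
    exact h.2.1 heq.1
  · rintro ⟨i, j⟩ h
    simp only [Finset.mem_sigma, Finset.mem_compl, Finset.mem_insert, not_or] at h ⊢
    exact ⟨h.2.2, Ne.symm h.2.1, h.1⟩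
  · rintro ⟨i, j⟩ h
    rfl

/-- A finitely supported family of coefficients is the coefficient family of a polynomial. -/
theorem exists_coeff_eq (c : (Fin n →₀ ℕ) → k) (s : Finset (Fin n →₀ ℕ))
    (hs : ∀ u, c u ≠ 0 → u ∈ s) : ∃ f : MvPolynomial (Fin n) k, ∀ u, coeff u f = c u := by
  classical
  refine ⟨∑ v ∈ s, monomial v (c v), fun u => ?_⟩
  simp only [coeff_sum, coeff_monomial, Finset.sum_ite_eq']
  split_ifs with h
  · rfl
  · by_contra h'
    exact h (hs u (Ne.symm h'))

theorem coeff_koszul {τ : Type*} (x : Finset (Fin n) → τ → MvPolynomial (Fin n) k) (T g) (u) :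
    coeff u (koszul k n τ x T g) = ∑ i ∈ Tᶜ, ksign k i (insert i T) *
      (if u i ≠ 0 then coeff (u - Finsupp.single i 1) (x (insert i T) g) else 0) := by
  simp [koszul_apply, coeff_sum, coeff_smul, coeff_X_mul']

open Classical in
/-- The coefficient of `x^u e_T` in the image of `f` under the contracting homotopy, which sends
`x^v e_S` to `x^{v - e_m} e_{S ∪ m}`, where `m` is the smallest index in `supp v ∪ S`,
if `m ∉ S`, and to `0` if `m ∈ S`.  At most one summand is nonzero, and no sign is needed
because `m` is smallest. -/
noncomputable def contractCoeff (f : Finset (Fin n) → MvPolynomial (Fin n) k)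
    (T : Finset (Fin n)) (u : Fin n →₀ ℕ) : k :=
  ∑ m ∈ T, if ∀ i, (i ∈ T ∨ u i ≠ 0) → m ≤ i then
    coeff (u + Finsupp.single m 1) (f (T.erase m)) else 0

open Classical in
theorem contractCoeff_eq (f : Finset (Fin n) → MvPolynomial (Fin n) k)
    {T : Finset (Fin n)} {u : Fin n →₀ ℕ} {m : Fin n} (hm : m ∈ T ∨ u m ≠ 0)
    (hmin : ∀ i, (i ∈ T ∨ u i ≠ 0) → m ≤ i) :
    contractCoeff f T u =
      if m ∈ T then coeff (u + Finsupp.single m 1) (f (T.erase m)) else 0 := by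
  rw [contractCoeff]
  have : ∀ m' ∈ T, (if ∀ i, (i ∈ T ∨ u i ≠ 0) → m' ≤ i then
      coeff (u + Finsupp.single m' 1) (f (T.erase m')) else 0) =
      if m' = m then coeff (u + Finsupp.single m 1) (f (T.erase m)) else 0 := by
    intro m' hm'
    by_cases h : m' = m
    · subst h
      rw [if_pos hmin, if_pos rfl]
    · rw [if_neg h, if_neg]
      intro h'
      exact h (le_antisymm (h' m hm) (hmin m' (Or.inl hm')))
  rw [Finset.sum_congr rfl this, Finset.sum_ite_eq']

theorem exists_contract (f : Finset (Fin n) → MvPolynomial (Fin n) k) (T : Finset (Fin n)) :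
    ∃ g : MvPolynomial (Fin n) k, ∀ u, coeff u g = contractCoeff f T u := by
  classical
  refine exists_coeff_eq _ (T.biUnion fun m =>
    (f (T.erase m)).support.image fun v => v - Finsupp.single m 1) fun u hu => ?_
  obtain ⟨m, hm, h⟩ := Finset.exists_ne_zero_of_sum_ne_zero hu
  simp only [Finset.mem_biUnion, Finset.mem_image, mem_support_iff]
  refine ⟨m, hm, u + Finsupp.single m 1, ?_, by simp⟩
  intro h0
  simp [h0] at h

/-- Exactness of the Koszul complex away from the constants of exterior degree `0`.  The primitive
`y` is the contraction of `x`; the second conclusion records where its coefficients come from, so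
that `y` inherits homogeneity from `x`. -/
theorem koszul_exact {τ : Type*} (x : Finset (Fin n) → τ → MvPolynomial (Fin n) k)
    (hx : koszul k n τ x = 0) (h0 : ∀ g, coeff 0 (x ∅ g) = 0) :
    ∃ y, koszul k n τ y = x ∧ ∀ T g u, coeff u (y T g) ≠ 0 →
      ∃ m ∈ T, coeff (u + Finsupp.single m 1) (x (T.erase m) g) ≠ 0 := by
  classical
  choose y hy using fun (T : Finset (Fin n)) (g : τ) => exists_contract (fun S => x S g) T
  refine ⟨y, ?_, ?_⟩
  · funext S g
    ext u
    rw [coeff_koszul]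
    simp only [hy]
    -- If `supp u ∪ S` is empty there is no smallest index; this is the constant coefficient.
    by_cases hne : ∃ i, i ∈ S ∨ u i ≠ 0
    swap
    · push Not at hne
      have hS : S = ∅ := Finset.eq_empty_of_forall_notMem fun i => (hne i).1
      have hu : u = 0 := by
        ext i
        exact (hne i).2
      subst hS hu
      simp [h0]
    obtain ⟨m, hm, hmin⟩ : ∃ m, (m ∈ S ∨ u m ≠ 0) ∧ ∀ i, (i ∈ S ∨ u i ≠ 0) → m ≤ i := by
      obtain ⟨m, hm⟩ := (Finset.univ.filter fun i => i ∈ S ∨ u i ≠ 0).exists_minimal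
        (by obtain ⟨i, hi⟩ := hne; exact ⟨i, by simpa using hi⟩)
      refine ⟨m, by simpa using hm.1, fun i hi => ?_⟩
      by_contra hlt
      exact hlt (hm.2 (by simpa using hi) (le_of_not_ge hlt))
    -- Moving `i` from `u` to `S` does not change `supp u ∪ S`, hence not the smallest index `m`.
    have key : ∀ i ∈ Sᶜ, u i ≠ 0 →
        contractCoeff (fun S => x S g) (insert i S) (u - Finsupp.single i 1) =
        if m ∈ insert i S then coeff (u - Finsupp.single i 1 + Finsupp.single m 1)
          (x ((insert i S).erase m) g) else 0 := by
      intro i hi hui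
      have hset : ∀ j, (j ∈ insert i S ∨ (u - Finsupp.single i 1 : Fin n →₀ ℕ) j ≠ 0) ↔
          (j ∈ S ∨ u j ≠ 0) := by
        intro j
        by_cases hji : j = i
        · subst hji
          simp [hui]
        · simp [hji]
      exact contractCoeff_eq _ ((hset m).2 hm) fun j hj => hmin j ((hset j).1 hj)
    by_cases hmS : m ∈ S
    · -- The cycle condition at `x^{u + e_m} e_{S ∖ m}` expresses the coefficient at `x^u e_S`.
      have h1 := congrArg (coeff (u + Finsupp.single m 1)) (congrFun (congrFun hx (S.erase m)) g)
      rw [coeff_koszul, Finset.compl_erase, Finset.sum_insert (by simpa using hmS),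
        Finset.insert_erase hmS] at h1
      have hs : ksign k m S = 1 := by
        rw [ksign, Finset.filter_false_of_mem, Finset.card_empty, pow_zero]
        intro i hi
        exact not_lt.2 (hmin i (Or.inl hi))
      simp only [hs, one_mul, Finsupp.add_apply, Finsupp.single_eq_same, ne_eq, Nat.succ_ne_zero,
        not_false_eq_true, if_true, add_tsub_cancel_right, Pi.zero_apply, coeff_zero] at h1
      rw [eq_neg_of_add_eq_zero_left h1, ← Finset.sum_neg_distrib]
      refine Finset.sum_congr rfl fun i hi => ?_
      have hiS : i ∉ S := by simpa using hi
      have him : i ≠ m := fun h => hiS (h ▸ hmS)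
      simp only [Finsupp.single_apply, Ne.symm him, if_false, add_zero]
      by_cases hui : u i = 0
      · simp [hui]
      · have hlt : m < i := lt_of_le_of_ne (hmin i (Or.inr hui)) (Ne.symm him)
        rw [if_pos hui, if_pos hui, key i hi hui, if_pos (Finset.mem_insert_of_mem hmS),
          Finset.erase_insert_of_ne him]
        have e1 : u - Finsupp.single i 1 + Finsupp.single m 1 =
            u + Finsupp.single m 1 - Finsupp.single i 1 := by
          ext j
          by_cases hji : j = i
          · subst hji
            simp [him]
          · simp [Finsupp.single_apply, Ne.symm hji]
        rw [e1]
        have e2 : ksign k i (insert i S) = - ksign k i (insert i (S.erase m)) := by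
          conv_lhs => rw [← Finset.insert_erase hmS]
          rw [ksign_insert_self, ksign_insert_self, ksign_insert_lt (Finset.notMem_erase m S) hlt]
        rw [e2]
        ring
    · -- For `m ∉ S` only the summand `i = m` survives.
      have hum : u m ≠ 0 := hm.resolve_left hmS
      rw [Finset.sum_eq_single m]
      · rw [if_pos hum, key m (by simpa using hmS) hum, if_pos (Finset.mem_insert_self _ _),
          Finset.erase_insert hmS]
        have hs : ksign k m (insert m S) = 1 := by
          rw [ksign_insert_self, ksign, Finset.filter_false_of_mem, Finset.card_empty, pow_zero]
          intro i hi
          exact not_lt.2 (hmin i (Or.inl hi))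
        rw [hs, one_mul, tsub_add_cancel_of_le]
        simpa [Finsupp.single_le_iff, Nat.one_le_iff_ne_zero] using hum
      · intro i hi him
        by_cases hui : u i = 0
        · simp [hui]
        · rw [if_pos hui, key i hi hui, if_neg, mul_zero]
          simp [hmS, Ne.symm him]
      · intro h
        exact absurd (by simpa using hmS) h
  · intro T g u hu
    rw [hy] at hu
    obtain ⟨m, hm, h⟩ := Finset.exists_ne_zero_of_sum_ne_zero hu
    refine ⟨m, hm, fun h0 => h ?_⟩
    simp [h0]

end Koszul


/-! ### The lattice ideal, fibers and homogeneous components -/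

section Fibers

variable {k : Type*} [Field k] {n : ℕ} (L : Submodule ℤ (Fin n → ℤ))

theorem degQ_add (u v : Fin n →₀ ℕ) : degQ L (u + v) = degQ L u + degQ L v := by
  simp only [degQ, ← Submodule.Quotient.mk_add]
  congr 1

theorem degQ_zero : degQ L (0 : Fin n →₀ ℕ) = 0 := by
  simp only [degQ, Finsupp.coe_zero, Pi.zero_apply, Nat.cast_zero]
  exact Submodule.Quotient.mk_zero L

/-- `degQ` as a homomorphism of additive monoids. -/
noncomputable def degHom : (Fin n →₀ ℕ) →+ ((Fin n → ℤ) ⧸ L) where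
  toFun := degQ L
  map_zero' := degQ_zero L
  map_add' := degQ_add L

/-- The ring homomorphism `k[x] → k[Γ]`, `x^u ↦ [deg x^u]`, which kills the lattice ideal. -/
noncomputable def latticeProj (k : Type*) [Field k] :
    MvPolynomial (Fin n) k →+* AddMonoidAlgebra k ((Fin n → ℤ) ⧸ L) :=
  AddMonoidAlgebra.mapDomainRingHom k (degHom L)

theorem latticeProj_monomial (u : Fin n →₀ ℕ) (a : k) :
    latticeProj L k (monomial u a) = AddMonoidAlgebra.single (degQ L u) a :=
  AddMonoidAlgebra.mapDomain_single

theorem posExp_sub_negExp (w : Fin n → ℤ) (i : Fin n) :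
    ((posExp w i : ℕ) : ℤ) - (negExp w i : ℕ) = w i := by
  simp [posExp, negExp]

theorem latticeIdeal_le_ker : latticeIdeal k L ≤ RingHom.ker (latticeProj L k) := by
  rw [latticeIdeal, Ideal.span_le]
  rintro _ ⟨w, hw, rfl⟩
  rw [SetLike.mem_coe, RingHom.mem_ker, latticeBinomial, map_sub, latticeProj_monomial,
    latticeProj_monomial, sub_eq_zero]
  congr 1
  refine (Submodule.Quotient.eq L).2 ?_
  convert hw using 1
  funext i
  exact posExp_sub_negExp w i

/-- If `h` is the homogeneous component of `f` of degree `D`, then the `D`-coefficient of the image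
of `f` in `k[Γ]` is the value of `h` at the point `(1, …, 1)`. -/
theorem coeff_latticeProj (f : MvPolynomial (Fin n) k) (D : (Fin n → ℤ) ⧸ L)
    (h : MvPolynomial (Fin n) k)
    (hh : ∀ u, (degQ L u = D → coeff u h = coeff u f) ∧ (degQ L u ≠ D → coeff u h = 0)) :
    (latticeProj L k f).coeff D = eval 1 h := by
  classical
  have h1 : (latticeProj L k f).coeff D =
      ∑ u ∈ f.support, if degQ L u = D then coeff u f else 0 := by
    conv_lhs => rw [f.as_sum]
    simp only [map_sum, latticeProj_monomial, AddMonoidAlgebra.coeff_sum, Finsupp.finsetSum_apply,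
      AddMonoidAlgebra.coeff_single, Finsupp.single_apply]
  rw [h1, eval_eq]
  simp only [Pi.one_apply, one_pow, Finset.prod_const_one, mul_one]
  symm
  refine Finset.sum_subset_zero_on_sdiff ?_ ?_ ?_
  · intro u hu
    rw [mem_support_iff] at hu ⊢
    by_cases hD : degQ L u = D
    · rwa [← (hh u).1 hD]
    · exact absurd ((hh u).2 hD) hu
  · intro u hu
    rw [Finset.mem_sdiff, mem_support_iff, mem_support_iff, not_not] at hu
    split_ifs with hD
    · rw [← (hh u).1 hD, hu.2]
    · rfl
  · intro u hu
    rw [mem_support_iff] at hu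
    by_cases hD : degQ L u = D
    · rw [if_pos hD, (hh u).1 hD]
    · exact absurd ((hh u).2 hD) hu

theorem eval_one_of_mem {f : MvPolynomial (Fin n) k} (hf : f ∈ latticeIdeal k L) :
    eval 1 f = 0 := by
  have h : latticeIdeal k L ≤ RingHom.ker (eval (1 : Fin n → k)) := by
    rw [latticeIdeal, Ideal.span_le]
    rintro _ ⟨w, hw, rfl⟩
    simp [latticeBinomial, eval_monomial]
  exact h hf

theorem monomial_sub_mem {u v : Fin n →₀ ℕ} (h : degQ L u = degQ L v) :
    (monomial u 1 - monomial v 1 : MvPolynomial (Fin n) k) ∈ latticeIdeal k L := by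
  have hw := (Submodule.Quotient.eq L).1 h
  set w : Fin n → ℤ := (fun i => (u i : ℤ)) - fun i => (v i : ℤ) with hwdef
  have hu : (u - posExp w) + posExp w = u := by
    ext i
    simp [hwdef, posExp]
  have hv : (u - posExp w) + negExp w = v := by
    ext i
    simp [hwdef, posExp, negExp]
    omega
  have : (monomial u 1 - monomial v 1 : MvPolynomial (Fin n) k) =
      monomial (u - posExp w) 1 * latticeBinomial k w := by
    rw [latticeBinomial, mul_sub, monomial_mul, monomial_mul, hu, hv, one_mul]
  rw [this]
  exact Ideal.mul_mem_left _ _ (Ideal.subset_span ⟨w, hw, rfl⟩)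

/-- A homogeneous polynomial vanishing at `(1, …, 1)` lies in the lattice ideal; hence each graded
piece of `k[x]/I_L` is at most one-dimensional. -/
theorem mem_latticeIdeal_of_eval {f : MvPolynomial (Fin n) k} {D : (Fin n → ℤ) ⧸ L}
    (hf : ∀ u, coeff u f ≠ 0 → degQ L u = D) (h1 : eval 1 f = 0) : f ∈ latticeIdeal k L := by
  by_cases h0 : ∃ u₀, coeff u₀ f ≠ 0
  swap
  · push Not at h0
    have : f = 0 := by
      ext u
      simp [h0]
    rw [this]
    exact zero_mem _
  obtain ⟨u₀, hu₀⟩ := h0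
  have hsum : ∑ u ∈ f.support, coeff u f = 0 := by
    rw [eval_eq] at h1
    simpa using h1
  have : f = ∑ u ∈ f.support, C (coeff u f) * (monomial u 1 - monomial u₀ 1) := by
    simp only [mul_sub, Finset.sum_sub_distrib, ← map_sum, hsum, map_zero,
      sub_zero, C_mul_monomial, mul_one]
    exact f.as_sum
  rw [this]
  refine Ideal.sum_mem _ fun u hu => Ideal.mul_mem_left _ _ (monomial_sub_mem L ?_)
  rw [hf u (mem_support_iff.1 hu), hf u₀ hu₀]

/-- The component of degree `D` of a vector `v` in the graded free module with generators of
degrees `deg g`. -/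
theorem exists_homogeneous {τ : Type*} (v : τ → MvPolynomial (Fin n) k)
    (deg : τ → (Fin n → ℤ) ⧸ L) (D : (Fin n → ℤ) ⧸ L) :
    ∃ w : τ → MvPolynomial (Fin n) k, ∀ g u,
      (degQ L u + deg g = D → coeff u (w g) = coeff u (v g)) ∧
      (degQ L u + deg g ≠ D → coeff u (w g) = 0) := by
  classical
  have : ∀ g, ∃ f : MvPolynomial (Fin n) k, ∀ u, coeff u f =
      if degQ L u + deg g = D then coeff u (v g) else 0 := by
    intro g
    refine exists_coeff_eq _ (v g).support fun u hu => ?_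
    rw [mem_support_iff]
    intro h
    simp [h] at hu
  choose w hw using this
  refine ⟨w, fun g u => ⟨fun h => ?_, fun h => ?_⟩⟩
  · rw [hw, if_pos h]
  · rw [hw, if_neg h]

/-- A homogeneous linear form `a` sends vectors of degree `D` to polynomials of degree `D - e`. -/
theorem coeff_dot_ne_zero {τ : Type*} [Fintype τ] {deg : τ → (Fin n → ℤ) ⧸ L}
    {e D : (Fin n → ℤ) ⧸ L} {a v : τ → MvPolynomial (Fin n) k}
    (ha : ∀ f, ∀ u ∈ (a f).support, degQ L u + e = deg f)
    (hv : ∀ f u, coeff u (v f) ≠ 0 → degQ L u + deg f = D) (u : Fin n →₀ ℕ)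
    (hu : coeff u (∑ f, a f * v f) ≠ 0) : degQ L u + e = D := by
  classical
  rw [coeff_sum] at hu
  obtain ⟨f, -, hf⟩ := Finset.exists_ne_zero_of_sum_ne_zero hu
  rw [coeff_mul] at hf
  obtain ⟨⟨s, t⟩, hst, hne⟩ := Finset.exists_ne_zero_of_sum_ne_zero hf
  rw [Finset.HasAntidiagonal.mem_antidiagonal] at hst
  have h1 := ha f s (mem_support_iff.2 (left_ne_zero_of_mul hne))
  have h2 := hv f t (right_ne_zero_of_mul hne)
  rw [← hst, degQ_add, ← h2, ← h1]
  abel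

/-- A homogeneous linear form commutes with taking homogeneous components. -/
theorem coeff_dot_homogeneous {τ : Type*} [Fintype τ] {deg : τ → (Fin n → ℤ) ⧸ L}
    {e D : (Fin n → ℤ) ⧸ L} {a v w : τ → MvPolynomial (Fin n) k}
    (ha : ∀ f, ∀ u ∈ (a f).support, degQ L u + e = deg f)
    (hw : ∀ g u, (degQ L u + deg g = D → coeff u (w g) = coeff u (v g)) ∧
      (degQ L u + deg g ≠ D → coeff u (w g) = 0)) (u : Fin n →₀ ℕ) :
    (degQ L u + e = D → coeff u (∑ f, a f * w f) = coeff u (∑ f, a f * v f)) ∧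
      (degQ L u + e ≠ D → coeff u (∑ f, a f * w f) = 0) := by
  classical
  constructor
  · intro hu
    simp only [coeff_sum, coeff_mul]
    refine Finset.sum_congr rfl fun f _ => Finset.sum_congr rfl fun st hst => ?_
    rw [Finset.HasAntidiagonal.mem_antidiagonal] at hst
    by_cases h0 : coeff st.1 (a f) = 0
    · rw [h0, zero_mul, zero_mul]
    · rw [(hw f st.2).1]
      rw [← ha f st.1 (mem_support_iff.2 h0), ← hu, ← hst, degQ_add]
      abel
  · intro hu
    by_contra h0
    refine hu (coeff_dot_ne_zero L (v := w) ha (fun f u h => ?_) u h0)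
    by_contra hne
    exact h ((hw f u).2 hne)

/-- The exponent vector `e_S` of the squarefree monomial `∏_{i ∈ S} x_i`. -/
noncomputable def sqfreeExp (S : Finset (Fin n)) : Fin n →₀ ℕ := ∑ i ∈ S, Finsupp.single i 1

theorem sqfreeExp_insert {i : Fin n} {S : Finset (Fin n)} (h : i ∉ S) :
    sqfreeExp (insert i S) = Finsupp.single i 1 + sqfreeExp S := Finset.sum_insert h

theorem sqfreeExp_apply (S : Finset (Fin n)) (i : Fin n) :
    sqfreeExp S i = if i ∈ S then 1 else 0 := by
  simp [sqfreeExp, Finsupp.finsetSum_apply, Finsupp.single_apply]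

/-- `F` is a face of `Δ_C` if and only if some monomial `x^u` satisfies `deg (x^u x^F) = C`. -/
theorem faceOf_iff (c : Fin n → ℤ) (F : Finset (Fin n)) :
    FaceOf L c F ↔ ∃ u : Fin n →₀ ℕ, degQ L (u + sqfreeExp F) = Submodule.Quotient.mk c := by
  constructor
  · rintro ⟨a, ha, hac, haF⟩
    refine ⟨Finsupp.equivFunOnFinite.symm (fun i => (a i).toNat) - sqfreeExp F, ?_⟩
    refine (Submodule.Quotient.eq L).2 ?_
    convert hac using 2
    funext i
    have h1 := ha i
    have h2 := haF i
    by_cases hi : i ∈ F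
    · have := h2 hi
      simp [sqfreeExp_apply, hi]
      omega
    · simp [sqfreeExp_apply, hi, h1]
  · rintro ⟨u, hu⟩
    refine ⟨fun i => ((u + sqfreeExp F) i : ℕ), fun i => Int.natCast_nonneg _,
      (Submodule.Quotient.eq L).1 hu, fun i hi => ?_⟩
    simp only [Finsupp.add_apply, sqfreeExp_apply, hi, if_true]
    omega

end Fibers

/-! ### The degree `C` part of the Koszul double complex -/

section GradedKoszul

variable {k : Type*} [Field k] {n : ℕ} (L : Submodule ℤ (Fin n → ℤ)) (C : (Fin n → ℤ) ⧸ L)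

/-- The part of exterior degree `q` and `Γ`-degree `C` of the Koszul complex on the graded free
module with generators of degrees `deg g`: the basis element `e_S ⊗ g` has degree
`deg x^S + deg g`. -/
def koszulPart (k : Type*) [Field k] {τ : Type*} (deg : τ → (Fin n → ℤ) ⧸ L) (q : ℕ) :
    Submodule k (Finset (Fin n) → τ → MvPolynomial (Fin n) k) where
  carrier := {x | ∀ S g u, coeff u (x S g) ≠ 0 →
    S.card = q ∧ degQ L (u + sqfreeExp S) + deg g = C}
  zero_mem' := by
    intro S g u hu
    simp at hu
  add_mem' := by
    intro x y hx hy S g u hu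
    by_cases h : coeff u (x S g) = 0
    · refine hy S g u fun h' => hu ?_
      simp [h, h']
    · exact hx S g u h
  smul_mem' := by
    intro a x hx S g u hu
    refine hx S g u fun h => hu ?_
    simp [h]

/-- The map induced on Koszul complexes by a matrix `A` of polynomials. -/
noncomputable def rowMap {τ τ' : Type*} [Fintype τ'] (A : Matrix τ τ' (MvPolynomial (Fin n) k)) :
    (Finset (Fin n) → τ' → MvPolynomial (Fin n) k) →ₗ[k]
      (Finset (Fin n) → τ → MvPolynomial (Fin n) k) where
  toFun x S g := ∑ f, A g f * x S f
  map_add' x y := by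
    funext S g
    simp [mul_add, Finset.sum_add_distrib]
  map_smul' a x := by
    funext S g
    simp [Finset.smul_sum]

theorem rowMap_apply {τ τ' : Type*} [Fintype τ'] (A : Matrix τ τ' (MvPolynomial (Fin n) k))
    (x S g) : rowMap A x S g = ∑ f, A g f * x S f := rfl

variable {L C} {τ τ' : Type*} {deg : τ → (Fin n → ℤ) ⧸ L} {deg' : τ' → (Fin n → ℤ) ⧸ L}

theorem koszul_mem {q : ℕ} {x : Finset (Fin n) → τ → MvPolynomial (Fin n) k}
    (hx : x ∈ koszulPart L C k deg (q + 1)) : koszul k n τ x ∈ koszulPart L C k deg q := by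
  intro T g u hu
  rw [coeff_koszul] at hu
  obtain ⟨i, hi, h⟩ := Finset.exists_ne_zero_of_sum_ne_zero hu
  rw [Finset.mem_compl] at hi
  have h' := right_ne_zero_of_mul h
  rw [ite_ne_right_iff] at h'
  obtain ⟨h1, h2⟩ := hx _ _ _ h'.2
  rw [Finset.card_insert_of_notMem hi] at h1
  refine ⟨by omega, ?_⟩
  rw [← h2, sqfreeExp_insert hi, ← add_assoc, tsub_add_cancel_of_le]
  simpa [Finsupp.single_le_iff, Nat.one_le_iff_ne_zero] using h'.1

theorem koszul_eq_zero {x : Finset (Fin n) → τ → MvPolynomial (Fin n) k}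
    (hx : x ∈ koszulPart L C k deg 0) : koszul k n τ x = 0 := by
  funext T g
  ext u
  rw [coeff_koszul, Pi.zero_apply, Pi.zero_apply, coeff_zero]
  refine Finset.sum_eq_zero fun i _ => ?_
  have : coeff (u - Finsupp.single i 1) (x (insert i T) g) = 0 := by
    by_contra h
    have := (hx _ _ _ h).1
    simp at this
  simp [this]

/-- Koszul cycles in degree `C` without constant term are boundaries of elements of degree `C`. -/
theorem koszul_lift {q : ℕ} {x : Finset (Fin n) → τ → MvPolynomial (Fin n) k}
    (hx : x ∈ koszulPart L C k deg q) (h : koszul k n τ x = 0) (h0 : ∀ g, coeff 0 (x ∅ g) = 0) :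
    ∃ y ∈ koszulPart L C k deg (q + 1), koszul k n τ y = x := by
  obtain ⟨y, hy, hyc⟩ := koszul_exact x h h0
  refine ⟨y, fun T g u hu => ?_, hy⟩
  obtain ⟨m, hm, hne⟩ := hyc T g u hu
  obtain ⟨h1, h2⟩ := hx _ _ _ hne
  refine ⟨by rw [← Finset.card_erase_add_one hm, h1], ?_⟩
  rw [← h2, add_assoc, ← sqfreeExp_insert (Finset.notMem_erase m T), Finset.insert_erase hm]

theorem koszul_lift_succ {q : ℕ} {x : Finset (Fin n) → τ → MvPolynomial (Fin n) k}
    (hx : x ∈ koszulPart L C k deg (q + 1)) (h : koszul k n τ x = 0) :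
    ∃ y ∈ koszulPart L C k deg (q + 2), koszul k n τ y = x := by
  refine koszul_lift hx h fun g => ?_
  by_contra h
  have := (hx _ _ _ h).1
  simp at this

theorem koszulPart_deg {q : ℕ} {x : Finset (Fin n) → τ → MvPolynomial (Fin n) k}
    (hx : x ∈ koszulPart L C k deg q) (S : Finset (Fin n)) (g : τ) (u : Fin n →₀ ℕ)
    (hu : coeff u (x S g) ≠ 0) : degQ L u + deg g = C - degQ L (sqfreeExp S) := by
  rw [← (hx S g u hu).2, degQ_add]
  abel

theorem koszulPart_zero {q : ℕ} {x : Finset (Fin n) → τ → MvPolynomial (Fin n) k}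
    (hx : x ∈ koszulPart L C k deg q) {S : Finset (Fin n)} (hS : S.card ≠ q) : x S = 0 := by
  funext g
  ext u
  by_contra h
  exact hS (hx S g u h).1

variable [Fintype τ'] {A : Matrix τ τ' (MvPolynomial (Fin n) k)}

theorem rowMap_mem (hA : ∀ g f, ∀ u ∈ (A g f).support, degQ L u + deg g = deg' f) {q : ℕ}
    {x : Finset (Fin n) → τ' → MvPolynomial (Fin n) k} (hx : x ∈ koszulPart L C k deg' q) :
    rowMap A x ∈ koszulPart L C k deg q := by
  intro S g u hu
  rw [rowMap_apply] at hu
  refine ⟨?_, ?_⟩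
  · by_contra hS
    apply hu
    simp [koszulPart_zero hx hS]
  · have := coeff_dot_ne_zero L (hA g) (koszulPart_deg hx S) u hu
    rw [degQ_add, add_right_comm, this, sub_add_cancel]

/-- If each component of a homogeneous `x` lies in the image of `A`, then `x` is the image of a
homogeneous element of the same degree. -/
theorem rowMap_lift (hA : ∀ g f, ∀ u ∈ (A g f).support, degQ L u + deg g = deg' f) {q : ℕ}
    {x : Finset (Fin n) → τ → MvPolynomial (Fin n) k} (hx : x ∈ koszulPart L C k deg q)
    (hr : ∀ S, x S ∈ LinearMap.range A.mulVecLin) :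
    ∃ y ∈ koszulPart L C k deg' q, rowMap A y = x := by
  classical
  choose v hv using hr
  choose w hw using fun S => exists_homogeneous L (v S) deg' (C - degQ L (sqfreeExp S))
  refine ⟨fun S => if S.card = q then w S else 0, ?_, ?_⟩
  · intro S g u hu
    by_cases hS : S.card = q
    · simp only [if_pos hS] at hu
      refine ⟨hS, ?_⟩
      by_contra h
      refine hu ((hw S g u).2 fun h' => h ?_)
      rw [degQ_add, add_right_comm, h', sub_add_cancel]
    · simp [hS] at hu
  · funext S g
    rw [rowMap_apply]
    by_cases hS : S.card = q
    · simp only [if_pos hS]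
      ext u
      have h1 := coeff_dot_homogeneous L (hA g) (hw S) u
      have h2 : ∑ f, A g f * v S f = x S g := by
        rw [← hv S]
        rfl
      by_cases hu : degQ L u + deg g = C - degQ L (sqfreeExp S)
      · rw [h1.1 hu, h2]
      · rw [h1.2 hu]
        by_contra h
        exact hu (koszulPart_deg hx S g u (Ne.symm h))
    · simp [hS, koszulPart_zero hx hS]

theorem rowMap_koszul (A : Matrix τ τ' (MvPolynomial (Fin n) k))
    (x : Finset (Fin n) → τ' → MvPolynomial (Fin n) k) :
    rowMap A (koszul k n τ' x) = koszul k n τ (rowMap A x) := by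
  funext T g
  simp only [rowMap_apply, koszul_apply, Finset.mul_sum, Finset.smul_sum]
  rw [Finset.sum_comm]
  refine Finset.sum_congr rfl fun i _ => Finset.sum_congr rfl fun f _ => ?_
  rw [mul_smul_comm, mul_left_comm]

end GradedKoszul

/-! ### Comparison with simplicial chains -/

section Boundary

variable {k : Type*} [Field k] {n : ℕ}

/-- The row of the simplicial boundary matrix indexed by `G`, applied to a function `ψ` on all
finite sets that is supported in cardinality `#G + 1`, is a signed sum over the indices outside
`G`. -/
theorem sum_boundary (G : Finset (Fin n)) (ψ : Finset (Fin n) → k)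
    (hψ : ∀ F, F.card ≠ G.card + 1 → ψ F = 0) :
    ∑ F, (if G ⊆ F then ∑ i ∈ F \ G, (-1 : k) ^ (F.filter fun x => x < i).card else 0) * ψ F =
      ∑ i ∈ Gᶜ, ksign k i (insert i G) * ψ (insert i G) := by
  have h1 : ∀ i ∈ Gᶜ, ksign k i (insert i G) * ψ (insert i G) =
      ∑ F, if F = insert i G then ksign k i F * ψ F else 0 := by
    intro i _
    rw [Finset.sum_ite_eq' Finset.univ, if_pos (Finset.mem_univ _)]
  rw [Finset.sum_congr rfl h1, Finset.sum_comm]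
  refine Finset.sum_congr rfl fun F _ => ?_
  by_cases hF : F.card = G.card + 1
  swap
  · simp [hψ F hF]
  have h2 : ∀ i ∈ Gᶜ, (F = insert i G ↔ G ⊆ F ∧ i ∈ F) := by
    intro i hi
    rw [Finset.mem_compl] at hi
    constructor
    · rintro rfl
      exact ⟨Finset.subset_insert _ _, Finset.mem_insert_self _ _⟩
    · rintro ⟨h, hiF⟩
      refine (Finset.eq_of_subset_of_card_le (Finset.insert_subset hiF h) ?_).symm
      rw [hF, Finset.card_insert_of_notMem hi]
  rw [Finset.sum_congr rfl fun i hi => if_congr (h2 i hi) rfl rfl]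
  by_cases hG : G ⊆ F
  · simp only [hG, if_true, true_and]
    rw [← Finset.sum_filter, Finset.sum_mul]
    refine Finset.sum_congr ?_ fun i _ => rfl
    ext i
    simp [and_comm]
  · simp [hG]

/-- The augmentation from the Koszul complex on `k[x]^τ` to simplicial chains: the coefficient at
a face `F` is the value at `(1, …, 1)` of the image `∑ p g * x F g` of the component `x F`.  Since
`k[x]/I_L` has one-dimensional pieces, spanned by any monomial of the given degree, this value
determines the class of the image. -/
noncomputable def faceEval {τ : Type*} [Fintype τ] (P : Finset (Fin n) → Prop)
    (p : τ → MvPolynomial (Fin n) k) (q : ℕ) :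
    (Finset (Fin n) → τ → MvPolynomial (Fin n) k) →ₗ[k]
      ({F : Finset (Fin n) // P F ∧ F.card = q} → k) where
  toFun x F := eval 1 (∑ g, p g * x F.1 g)
  map_add' x y := by
    funext F
    simp [mul_add, Finset.sum_add_distrib]
  map_smul' a x := by
    funext F
    simp [Finset.mul_sum]

theorem faceEval_apply {τ : Type*} [Fintype τ] (P : Finset (Fin n) → Prop)
    (p : τ → MvPolynomial (Fin n) k) (q : ℕ) (x F) :
    faceEval P p q x F = eval 1 (∑ g, p g * x F.1 g) := rfl

end Boundary

/-! ### The double complex of a minimal graded resolution -/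

section Main

variable {k : Type*} [Field k] {n : ℕ} {L : Submodule ℤ (Fin n → ℤ)}
  {σ : ℕ → Type} [∀ i, Fintype (σ i)] {deg : ∀ i, σ i → ((Fin n → ℤ) ⧸ L)}
  {A : ∀ i, Matrix (σ i) (σ (i + 1)) (MvPolynomial (Fin n) k)}
  {p : σ 0 → MvPolynomial (Fin n) k}

/-- The degree `C` part of the tensor product of the Koszul complex with a minimal graded free
resolution.  The columns are exact by `koszul_lift_succ`, and minimality of the resolution gives
the field `minimal`. -/
theorem exactDC_of_resolution (hres : IsMinimalGradedFreeResolution k L σ deg A p)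
    (C : (Fin n → ℤ) ⧸ L) :
    ExactDC (E := fun i => Finset (Fin n) → σ i → MvPolynomial (Fin n) k)
      (fun i q => koszulPart L C k (deg i) q) (fun i => rowMap (A i))
      (fun i => koszul k n (σ i)) := by
  obtain ⟨⟨h1, h2, h3⟩, hp, hA, hmin⟩ := hres
  refine ⟨fun i q x hx => rowMap_mem (hA i) hx, fun i q x hx => koszul_mem hx,
    fun i x hx => koszul_eq_zero hx, fun i x => rowMap_koszul _ _, ?_,
    fun i x => koszul_koszul x, ?_, fun i q x hx h => koszul_lift_succ hx h, ?_⟩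
  · intro i x
    funext S
    have : (A (i + 1)).mulVecLin (x S) ∈ LinearMap.ker (A i).mulVecLin := by
      rw [h3]
      exact LinearMap.mem_range_self _ _
    exact this
  · intro i q x hx hd
    refine rowMap_lift (hA (i + 1)) hx fun S => ?_
    rw [← h3]
    exact congrFun hd S
  · intro i y hy
    have hmem := rowMap_mem (hA i) hy
    refine koszul_lift hmem (koszul_eq_zero hmem) fun g => ?_
    rw [rowMap_apply, coeff_sum]
    refine Finset.sum_eq_zero fun f _ => ?_
    rw [← constantCoeff_eq, map_mul, constantCoeff_eq, hmin, zero_mul]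

/-- The augmentation `v ↦ ∑ p g * v g` is homogeneous of degree `0`. -/
theorem coeff_dot_p (hp : ∀ g, ∀ u ∈ (p g).support, degQ L u = deg 0 g)
    {C : (Fin n → ℤ) ⧸ L} {q : ℕ} {x : Finset (Fin n) → σ 0 → MvPolynomial (Fin n) k}
    (hx : x ∈ koszulPart L C k (deg 0) q) (S : Finset (Fin n)) (u : Fin n →₀ ℕ)
    (hu : coeff u (∑ g, p g * x S g) ≠ 0) : degQ L u = C - degQ L (sqfreeExp S) := by
  have := coeff_dot_ne_zero L (e := 0) (by simpa using hp) (koszulPart_deg hx S) u hu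
  simpa using this

theorem eval_eq_zero_of_not_face (hp : ∀ g, ∀ u ∈ (p g).support, degQ L u = deg 0 g)
    {c : Fin n → ℤ} {q : ℕ} {x : Finset (Fin n) → σ 0 → MvPolynomial (Fin n) k}
    (hx : x ∈ koszulPart L (Submodule.Quotient.mk c) k (deg 0) q) {S : Finset (Fin n)}
    (hS : ¬ FaceOf L c S) : ∑ g, p g * x S g = 0 := by
  ext u
  rw [coeff_zero]
  by_contra h
  refine hS ((faceOf_iff L c S).2 ⟨u, ?_⟩)
  rw [degQ_add, coeff_dot_p hp hx S u h, sub_add_cancel]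

/-- Every simplicial chain lifts to the Koszul complex.  For a face `S` there is a monomial of
degree `C - deg x^S`; modulo `I_L` it lies in the ideal generated by the `p g`, and the
homogeneous component of such a representation has value `1` at `(1, …, 1)`. -/
theorem faceEval_surj (hres : IsMinimalGradedFreeResolution k L σ deg A p) (c : Fin n → ℤ)
    (q : ℕ) (y : {F : Finset (Fin n) // FaceOf L c F ∧ F.card = q} → k) :
    ∃ x ∈ koszulPart L (Submodule.Quotient.mk c) k (deg 0) q,
      faceEval (FaceOf L c) p q x = y := by
  classical
  obtain ⟨⟨h1, h2, h3⟩, hp, hA, hmin⟩ := hres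
  have key : ∀ S, FaceOf L c S → ∃ w : σ 0 → MvPolynomial (Fin n) k,
      (∀ g u, coeff u (w g) ≠ 0 →
        degQ L u + deg 0 g = Submodule.Quotient.mk c - degQ L (sqfreeExp S)) ∧
      eval 1 (∑ g, p g * w g) = 1 := by
    intro S hS
    obtain ⟨u, hu⟩ := (faceOf_iff L c S).1 hS
    rw [degQ_add, ← eq_sub_iff_add_eq] at hu
    set D : (Fin n → ℤ) ⧸ L := Submodule.Quotient.mk c - degQ L (sqfreeExp S)
    have hm : (monomial u 1 : MvPolynomial (Fin n) k) ∈
        Ideal.span (Set.range p) ⊔ latticeIdeal k L := by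
      rw [h1]
      trivial
    obtain ⟨a, ha, b, hb, hab⟩ := Submodule.mem_sup.1 hm
    obtain ⟨v, rfl⟩ := (Ideal.mem_span_range_iff_exists_fun).1 ha
    obtain ⟨w, hw⟩ := exists_homogeneous L v (deg 0) D
    refine ⟨w, fun g u' h => ?_, ?_⟩
    · by_contra h'
      exact h ((hw g u').2 h')
    · have h4 := coeff_dot_homogeneous L (e := 0) (a := p) (by simpa using hp) hw
      simp only [add_zero] at h4
      rw [← coeff_latticeProj L (∑ g, p g * v g) D _ h4]
      have h5 : latticeProj L k (∑ g, p g * v g) = latticeProj L k (monomial u 1) := by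
        rw [← hab, map_add, RingHom.mem_ker.1 (latticeIdeal_le_ker L hb), add_zero]
        simp only [mul_comm]
      rw [h5, latticeProj_monomial, hu, AddMonoidAlgebra.coeff_single, Finsupp.single_eq_same]
  choose! w hw1 hw2 using key
  refine ⟨fun S => if h : FaceOf L c S ∧ S.card = q then y ⟨S, h⟩ • w S else 0, ?_, ?_⟩
  · intro S g u hu
    by_cases h : FaceOf L c S ∧ S.card = q
    · simp only [dif_pos h] at hu
      refine ⟨h.2, ?_⟩
      rw [degQ_add, add_right_comm, hw1 S h.1 g u, sub_add_cancel]
      intro h0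
      apply hu
      simp [h0]
    · simp [dif_neg h] at hu
  · funext F
    rw [faceEval_apply]
    simp only [dif_pos F.2, Pi.smul_apply, mul_smul_comm]
    rw [← Finset.smul_sum, smul_eval, hw2 F.1 F.2.1, mul_one]

/-- The kernel of the augmentation onto simplicial chains is the image of the row map, by
exactness of the resolution at its last term. -/
theorem faceEval_ker (hres : IsMinimalGradedFreeResolution k L σ deg A p) (c : Fin n → ℤ)
    (q : ℕ) (x) (hx : x ∈ koszulPart L (Submodule.Quotient.mk c) k (deg 0) q) :
    faceEval (FaceOf L c) p q x = 0 ↔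
      ∃ y ∈ koszulPart L (Submodule.Quotient.mk c) k (deg 1) q, rowMap (A 0) y = x := by
  obtain ⟨⟨h1, h2, h3⟩, hp, hA, hmin⟩ := hres
  constructor
  · intro h
    refine rowMap_lift (hA 0) hx fun S => (h2 _).1 ?_
    simp only [mul_comm _ (p _)]
    -- If `S` is not a face, there is no monomial of degree `C - deg x^S`.
    by_cases hS : FaceOf L c S
    swap
    · rw [eval_eq_zero_of_not_face hp hx hS]
      exact zero_mem _
    by_cases hq : S.card = q
    · exact mem_latticeIdeal_of_eval L (coeff_dot_p hp hx S) (congrFun h ⟨S, hS, hq⟩)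
    · simp [koszulPart_zero hx hq]
  · rintro ⟨y, hy, rfl⟩
    funext F
    rw [faceEval_apply]
    refine eval_one_of_mem L ?_
    have := (h2 (rowMap (A 0) y F.1)).2 ⟨y F.1, rfl⟩
    simpa only [mul_comm] using this

/-- The augmentation intertwines the Koszul differential and the simplicial boundary. -/
theorem faceEval_comm (hres : IsMinimalGradedFreeResolution k L σ deg A p) (c : Fin n → ℤ)
    [∀ q, Fintype {F : Finset (Fin n) // FaceOf L c F ∧ F.card = q}]
    (q : ℕ) (x) (hx : x ∈ koszulPart L (Submodule.Quotient.mk c) k (deg 0) (q + 1)) :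
    (boundaryMatrix k (FaceOf L c) q).mulVecLin (faceEval (FaceOf L c) p (q + 1) x) =
      faceEval (FaceOf L c) p q (koszul k n (σ 0) x) := by
  classical
  obtain ⟨-, hp, -⟩ := hres
  funext G
  have hψ : ∀ F, ¬ (FaceOf L c F ∧ F.card = q + 1) → eval 1 (∑ g, p g * x F g) = 0 := by
    intro F hF
    by_cases h : FaceOf L c F
    · have : F.card ≠ q + 1 := fun h' => hF ⟨h, h'⟩
      simp [koszulPart_zero hx this]
    · rw [eval_eq_zero_of_not_face hp hx h, map_zero]
  have h1 : faceEval (FaceOf L c) p q (koszul k n (σ 0) x) G =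
      ∑ i ∈ (G.1)ᶜ, ksign k i (insert i G.1) * eval 1 (∑ g, p g * x (insert i G.1) g) := by
    rw [faceEval_apply]
    simp only [koszul_apply, Finset.mul_sum, map_sum]
    rw [Finset.sum_comm]
    refine Finset.sum_congr rfl fun i _ => Finset.sum_congr rfl fun g _ => ?_
    simp [smul_eval]
  rw [h1, ← sum_boundary G.1 (fun F => eval 1 (∑ g, p g * x F g))
    (fun F hF => hψ F fun h => hF (by rw [h.2, G.2.2]))]
  rw [Matrix.mulVecLin_apply, Matrix.mulVec, dotProduct]
  symm
  refine (Finset.sum_subset (Finset.subset_univ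
    (Finset.univ.filter fun F => FaceOf L c F ∧ F.card = q + 1)) ?_).symm.trans ?_
  · intro F _ hF
    rw [hψ F (by simpa using hF), mul_zero]
  · rw [Finset.sum_subtype (p := fun F => FaceOf L c F ∧ F.card = q + 1) _ (by simp)]
    rfl

/-- In the bottom row, cycles modulo boundaries have as basis the generators of degree `C`: by
minimality both kinds of boundaries have zero constant terms, and conversely an element with zero
constant terms is a Koszul boundary. -/
theorem generators_rank (hres : IsMinimalGradedFreeResolution k L σ deg A p)
    (C : (Fin n → ℤ) ⧸ L) (i : ℕ) :
    subquotRank (dcCycles (E := fun i => Finset (Fin n) → σ i → MvPolynomial (Fin n) k)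
        (fun i q => koszulPart L C k (deg i) q) (fun i => rowMap (A i))
        (fun i => koszul k n (σ i)) i 0)
      (dcBoundaries (E := fun i => Finset (Fin n) → σ i → MvPolynomial (Fin n) k)
        (fun i q => koszulPart L C k (deg i) q) (fun i => rowMap (A i))
        (fun i => koszul k n (σ i)) i 0) = Nat.card {g : σ i // deg i g = C} := by
  classical
  have hdc := exactDC_of_resolution hres C
  obtain ⟨-, -, hA, hmin⟩ := hres
  -- Constant coefficients at `e_∅ ⊗ g` for the generators `g` of degree `C`.
  let ev : (Finset (Fin n) → σ i → MvPolynomial (Fin n) k) →ₗ[k] ({g : σ i // deg i g = C} → k) :=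
    LinearMap.pi fun g => lcoeff k 0 ∘ₗ LinearMap.proj g.1 ∘ₗ LinearMap.proj ∅
  have hev : ∀ x g, ev x g = coeff 0 (x ∅ g.1) := fun x g => rfl
  have h0 : sqfreeExp (∅ : Finset (Fin n)) = 0 := Finset.sum_empty
  have hcard : subquotRank (⊤ : Submodule k ({g : σ i // deg i g = C} → k)) ⊥ =
      Nat.card {g : σ i // deg i g = C} := by
    rw [subquotRank_of_le bot_le, finrank_top, finrank_bot, Module.finrank_fintype_fun_eq_card,
      Nat.card_eq_fintype_card, Nat.sub_zero]
  rw [← hcard]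
  refine subquotRank_eq (W := koszulPart L C k (deg i) 0) (Submodule.subtype _)
    (ev ∘ₗ Submodule.subtype _) ?_ ?_ ?_
  · rw [Submodule.range_subtype]
    ext x
    rw [mem_dcCycles]
    exact ⟨fun hx => ⟨hx, 0, zero_mem _, by rw [map_zero, hdc.δ_zero _ _ hx]⟩, fun hx => hx.1⟩
  · rw [LinearMap.range_eq_top]
    intro y
    refine ⟨⟨fun S g => if h : S = ∅ ∧ deg i g = C then MvPolynomial.C (y ⟨g, h.2⟩) else 0, ?_⟩, ?_⟩
    · intro S g u hu
      by_cases h : S = ∅ ∧ deg i g = C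
      · simp only [dif_pos h] at hu
        rw [coeff_C, ite_ne_right_iff] at hu
        rw [h.1, ← hu.1, h0, add_zero, degQ_zero, zero_add]
        exact ⟨rfl, h.2⟩
      · simp [dif_neg h] at hu
    · funext g
      simp [hev, g.2]
  · rintro ⟨x, hx⟩
    rw [LinearMap.comp_apply, Submodule.subtype_apply, mem_dcBoundaries, Submodule.mem_bot]
    constructor
    · rintro ⟨a, ha, b, hb, rfl⟩
      funext g
      change coeff 0 ((rowMap (A i) a + koszul k n (σ i) b) ∅ g.1) = 0
      rw [Pi.add_apply, Pi.add_apply, coeff_add, coeff_koszul, rowMap_apply, coeff_sum]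
      simp only [Finsupp.coe_zero, Pi.zero_apply, ne_eq, not_true_eq_false, if_false, mul_zero,
        Finset.sum_const_zero, add_zero]
      refine Finset.sum_eq_zero fun f _ => ?_
      rw [← constantCoeff_eq, map_mul, constantCoeff_eq, hmin, zero_mul]
    · intro h
      obtain ⟨b, hb, hbx⟩ := koszul_lift hx (koszul_eq_zero hx) fun g => by
        by_contra hne
        have hg : deg i g = C := by
          simpa [h0, degQ_zero] using (hx _ _ _ hne).2
        exact hne (congrFun h ⟨g, hg⟩)
      exact ⟨0, zero_mem _, b, hb, by rw [map_zero, zero_add, hbx]⟩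

end Main

/-- Lemma `pslemma`: for a positive lattice `ℤB` spanned by the
columns of a full-rank `B ∈ ℤ^{n×m}` and a fiber `C = c + ℤB`, the multigraded Betti
number `β_{j+1,C}(k[x]/I_{ℤB})` — read off from any minimal `Γ`-graded free resolution
as the number of generators in homological degree `j+1` and degree `C` — equals the
rank of the `j`-th reduced homology of the simplicial complex `Δ_C`. -/
theorem statement6 (k : Type*) [Field k] {n m : ℕ} (B : Matrix (Fin n) (Fin m) ℤ)
    (hrank : B.rank = m) (hpos : IsPositiveLattice (colSpan B))
    (c : Fin n → ℤ) (j : ℕ)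
    (σ : ℕ → Type) [∀ i, Fintype (σ i)]
    (deg : ∀ i, σ i → ((Fin n → ℤ) ⧸ colSpan B))
    (A : ∀ i, Matrix (σ i) (σ (i + 1)) (MvPolynomial (Fin n) k))
    (p : σ 0 → MvPolynomial (Fin n) k)
    (hres : IsMinimalGradedFreeResolution k (colSpan B) σ deg A p) :
    Nat.card {g : σ (j + 1) // deg (j + 1) g = Submodule.Quotient.mk c} =
      reducedHomologyRank k (FaceOf (colSpan B) c) j := by
  let _ : ∀ q, Fintype {F : Finset (Fin n) // FaceOf (colSpan B) c F ∧ F.card = q} :=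
    fun q => Fintype.ofFinite _
  have hdc := exactDC_of_resolution hres (Submodule.Quotient.mk c)
  obtain ⟨hle, haug⟩ := hdc.augment
    (Y := fun q => {F : Finset (Fin n) // FaceOf (colSpan B) c F ∧ F.card = q} → k)
    (fun q => (boundaryMatrix k (FaceOf (colSpan B) c) q).mulVecLin)
    (fun q => faceEval (FaceOf (colSpan B) c) p q) (faceEval_surj hres c)
    (faceEval_ker hres c) (faceEval_comm hres c) j
  rw [← generators_rank hres, ← Nat.zero_add (j + 1), ← hdc.staircase (j + 1) 0, haug,
    subquotRank_of_le hle]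
  -- Rank–nullity turns `dim ker ∂_j` into the number of faces minus the rank of `∂_j`.
  have hrn := LinearMap.finrank_range_add_finrank_ker
    (boundaryMatrix k (FaceOf (colSpan B) c) j).mulVecLin
  rw [Module.finrank_fintype_fun_eq_card] at hrn
  change _ = Fintype.card {F : Finset (Fin n) // FaceOf (colSpan B) c F ∧ F.card = j + 1} -
    Module.finrank k (LinearMap.range (boundaryMatrix k (FaceOf (colSpan B) c) j).mulVecLin) -
    Module.finrank k (LinearMap.range (boundaryMatrix k (FaceOf (colSpan B) c) (j + 1)).mulVecLin)
  omega
end
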